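/- arXiv:0901.0231 — 2 statements merged into one kernel-verified Lean document; each statement's English description precedes it below -/
import Mathlib

section
/- Let P = conv(V) ⊆ ℝ^N and P' = conv(V') ⊆ ℝ^{N'} be polytopes whose vertex sets have the same oriented matroid via a bijection φ : V → V'. Then for every subset M ⊆ V, the affine hull of M is a split hyperplane of P if and only if the affine hull of φ(M) is a split hyperplane of P'. Moreover, if M₁, M₂ ⊆ V are subsets whose affine hulls are split hyperplanes of P, then aff(M₁) ∩ aff(M₂) ∩ relint(P) = ∅ if and only if aff(φ(M₁)) ∩ aff(φ(M₂)) ∩ relint(P') = ∅; that is, the corresponding splits of P are compatible exactly when the corresponding splits of P' are. -/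
/-!
Fix the finite vertex set `s` of a polytope `P`.  The proof rewrites every notion in the statement
as a condition on the signs of the affine dependences of `s`; such conditions are transported by an
equivalence of oriented matroids.

* A vertex `v` lies in `aff M` iff it has affine coordinates supported on `M`; subtracting them from
  the coordinate vector of `v` gives a dependence, so `v ∈ aff M` can be transported, and with it the
  condition that `aff M` has codimension one (`OMEquiv.mem_aff`, `hyperplane_iff`).
* A point of `P` with nonnegative weights `w` is in the relative interior iff some dependence is
  positive wherever `w` vanishes (`mem_relint_iff`).
* The segment `[u, w]` is an edge iff every dependence that is nonnegative off `{u, w}` vanishes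
  there (`combEdge_of_isEdge`, and `isEdge_of_combEdge` by separating the line through `u` and `w`
  from the hull of the other vertices).
* If a hyperplane `H` cuts no edge, the extreme points of `H ∩ P` are vertices of `P`
  (`extreme_mem_vertices`), so `H ∩ P = conv (H ∩ s)` by Krein–Milman (`inter_subset_conv`).
  Therefore `H` meets the relative interior iff some dependence is positive on all vertices off `H`.

This makes being a split hyperplane a sign condition (`isSplitHyperplane_iff`).  For compatibility, a
common relative interior point of two split hyperplanes is a convex combination of vertices on the
first and also of vertices on the second.  The difference of the two systems of weights is a
dependence; the positive and the negative part of its transport, after adding equal weights on the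
vertices common to both hyperplanes, represent a common relative interior point of the images
(`OMEquiv.inter_nonempty`).
-/

open scoped BigOperators

noncomputable section

namespace TSP

/-- `ℝ^N` with the Euclidean norm. -/
abbrev E (N : ℕ) : Type := EuclideanSpace ℝ (Fin N)

/-- The dimension of the affine hull of a set. -/
def adim {N : ℕ} (S : Set (E N)) : ℕ := Module.finrank ℝ (affineSpan ℝ S).direction

/-- `V` is the vertex set of the polytope `conv V`:  `V` is finite, nonempty and coincides
with the set of extreme points of its convex hull. -/
def IsPolytope {N : ℕ} (V : Set (E N)) : Prop :=
  V.Finite ∧ V.Nonempty ∧ V = Set.extremePoints ℝ (convexHull ℝ V)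

/-- `F` is a face of the polytope with vertex set `V`: the set of maximizers over the
polytope of some affine functional. -/
def IsFaceOf {N : ℕ} (V : Set (E N)) (F : Set (E N)) : Prop :=
  ∃ a : E N →ᵃ[ℝ] ℝ,
    F = {x | x ∈ convexHull ℝ V ∧ ∀ y ∈ convexHull ℝ V, a y ≤ a x}

/-- A facet is a face of dimension `dim P - 1`. -/
def IsFacetOf {N : ℕ} (V : Set (E N)) (F : Set (E N)) : Prop :=
  IsFaceOf V F ∧ adim F + 1 = adim V

/-- Two distinct vertices are joined by an edge if their segment is a (1-dimensional) face. -/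
def IsEdge {N : ℕ} (V : Set (E N)) (u w : E N) : Prop :=
  u ≠ w ∧ IsFaceOf V (convexHull ℝ {u, w})

/-- The neighbors of a vertex `v`: the vertices joined to `v` by an edge. -/
def neighbors {N : ℕ} (V : Set (E N)) (v : E N) : Set (E N) :=
  {w | w ∈ V ∧ IsEdge V v w}

/-- Two points lie strictly on opposite sides of the affine subspace `H`. -/
def StrictlySeparates {N : ℕ} (H : AffineSubspace ℝ (E N)) (u w : E N) : Prop :=
  u ∉ H ∧ w ∉ H ∧ (openSegment ℝ u w ∩ (H : Set (E N))).Nonempty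

/-- A split hyperplane of the polytope with vertex set `V`: an affine subspace of
`aff V` of dimension `dim V - 1` which meets the relative interior of the polytope and
does not separate the endpoints of any edge strictly. -/
def IsSplitHyperplane {N : ℕ} (V : Set (E N)) (H : AffineSubspace ℝ (E N)) : Prop :=
  H ≤ affineSpan ℝ V ∧
  Module.finrank ℝ H.direction + 1 = adim V ∧
  ((H : Set (E N)) ∩ intrinsicInterior ℝ (convexHull ℝ V)).Nonempty ∧
  ∀ u w : E N, IsEdge V u w → ¬ StrictlySeparates H u w

/-- A triangulation (without new vertices) of the polytope with vertex set `V`. -/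
def IsTriangulation {N : ℕ} (V : Set (E N)) (Δ : Set (Set (E N))) : Prop :=
  Δ.Finite ∧
  (∀ S ∈ Δ, S ⊆ V ∧ S.ncard = adim V + 1 ∧
    AffineIndependent ℝ (fun x : S => (x : E N))) ∧
  (⋃ S ∈ Δ, convexHull ℝ S) = convexHull ℝ V ∧
  (∀ S ∈ Δ, ∀ T ∈ Δ, convexHull ℝ S ∩ convexHull ℝ T = convexHull ℝ (S ∩ T))

/-- A regular triangulation: one induced by a lifting function `lam` on the vertices. -/
def IsRegularTriangulation {N : ℕ} (V : Set (E N)) (Δ : Set (Set (E N))) : Prop :=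
  IsTriangulation V Δ ∧
  ∃ lam : E N → ℝ, ∀ S : Set (E N), S ⊆ V →
    (S ∈ Δ ↔ ∃ a : E N →ᵃ[ℝ] ℝ, (∀ v ∈ S, a v = lam v) ∧ ∀ v ∈ V \ S, a v < lam v)

/-- The triangulation `Δ` is induced by splits: there is a set `𝒮` of split hyperplanes
such that the cells of `Δ` are precisely the closures of the connected components of the
relative interior of the polytope with the split hyperplanes removed. -/
def InducedBySplits {N : ℕ} (V : Set (E N)) (Δ : Set (Set (E N))) : Prop :=
  ∃ 𝒮 : Set (AffineSubspace ℝ (E N)), (∀ H ∈ 𝒮, IsSplitHyperplane V H) ∧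
    convexHull ℝ '' Δ =
      {C : Set (E N) |
        ∃ x ∈ intrinsicInterior ℝ (convexHull ℝ V) \ ⋃ H ∈ 𝒮, (H : Set (E N)),
          C = closure (connectedComponentIn
            (intrinsicInterior ℝ (convexHull ℝ V) \ ⋃ H ∈ 𝒮, (H : Set (E N))) x)}

/-- A polytope is totally splittable if each of its regular triangulations is induced
by splits. -/
def TotallySplittable {N : ℕ} (V : Set (E N)) : Prop :=
  ∀ Δ : Set (Set (E N)), IsRegularTriangulation V Δ → InducedBySplits V Δ

/-- One half of the "same oriented matroid" relation: every affine dependence on `V`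
has a sign-matching affine dependence on `V'` (via the map `φ`). -/
def OMMap {N M : ℕ} (V : Set (E N)) (V' : Set (E M)) (φ : E N → E M) : Prop :=
  ∀ lam : E N → ℝ, (∀ v, v ∉ V → lam v = 0) →
    (∑ᶠ v : E N, lam v) = 0 → (∑ᶠ v : E N, lam v • v) = 0 →
    ∃ mu : E M → ℝ, (∀ u, u ∉ V' → mu u = 0) ∧
      (∑ᶠ u : E M, mu u) = 0 ∧ (∑ᶠ u : E M, mu u • u) = 0 ∧
      ∀ v ∈ V, Real.sign (mu (φ v)) = Real.sign (lam v)

/-- Two finite point sets have the same oriented matroid. -/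
def SameOrientedMatroid {N M : ℕ} (V : Set (E N)) (V' : Set (E M)) : Prop :=
  ∃ (φ : E N → E M) (ψ : E M → E N),
    Set.BijOn φ V V' ∧ (∀ v ∈ V, ψ (φ v) = v) ∧ (∀ u ∈ V', φ (ψ u) = u) ∧
    OMMap V V' φ ∧ OMMap V' V ψ

/-- Two nonempty point sets with skew affine hulls. -/
def IsJoinPartition {N : ℕ} (V₁ V₂ : Set (E N)) : Prop :=
  V₁.Nonempty ∧ V₂.Nonempty ∧
  ((affineSpan ℝ V₁ : Set (E N)) ∩ (affineSpan ℝ V₂ : Set (E N))) = ∅ ∧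
  adim (V₁ ∪ V₂) = adim V₁ + adim V₂ + 1

/-- The polytope with vertex set `V` is a join. -/
def IsJoin {N : ℕ} (V : Set (E N)) : Prop :=
  ∃ V₁ V₂ : Set (E N), V₁ ∪ V₂ = V ∧ Disjoint V₁ V₂ ∧ IsJoinPartition V₁ V₂

/-- The polytope with vertex set `V` is a pyramid. -/
def IsPyramid {N : ℕ} (V : Set (E N)) : Prop :=
  ∃ (v : E N) (V₂ : Set (E N)), {v} ∪ V₂ = V ∧ v ∉ V₂ ∧ IsJoinPartition {v} V₂

/-- `v^⊥`: the affine span of the neighbors of the vertex `v`. -/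
def vperp {N : ℕ} (V : Set (E N)) (v : E N) : AffineSubspace ℝ (E N) :=
  affineSpan ℝ (neighbors V v)

/-- The polytope with vertex set `V` admits a vertex split at `v`: the neighbors of `v`
span an affine subspace of dimension `dim V - 1` strictly separating `v` from all the
remaining vertices. -/
def AdmitsVertexSplit {N : ℕ} (V : Set (E N)) (v : E N) : Prop :=
  Module.finrank ℝ (vperp V v).direction + 1 = adim V ∧
  ∃ a : E N →ᵃ[ℝ] ℝ, (∀ x ∈ neighbors V v, a x = 0) ∧ a v < 0 ∧
    ∀ w ∈ V, w ≠ v → w ∉ neighbors V v → 0 < a w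

/-- The vertex set of the regular `d`-dimensional crosspolytope `conv {±e₁, …, ±e_d}`. -/
def crossVertices (d : ℕ) : Set (E d) :=
  {x | ∃ i : Fin d, x = EuclideanSpace.single i (1 : ℝ) ∨
        x = -EuclideanSpace.single i (1 : ℝ)}

/-- The vertex set of the prism over a `(d-1)`-simplex:
`conv {e₁, …, e_d, f₁, …, f_d}` with `f_k = -∑_{i ≠ k} e_i`. -/
def simplexPrismVertices (d : ℕ) : Set (E d) :=
  {x | ∃ k : Fin d, x = EuclideanSpace.single k (1 : ℝ) ∨
        x = -∑ i ∈ Finset.univ.erase k, EuclideanSpace.single i (1 : ℝ)}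

/-- `v` is almost beyond the facet `F` of the polytope with vertex set `V`. -/
def AlmostBeyond {N : ℕ} (V : Set (E N)) (F : Set (E N)) (v : E N) : Prop :=
  IsFacetOf V F ∧ v ∉ convexHull ℝ V ∧
  (∃ a : E N →ᵃ[ℝ] ℝ, (∀ x ∈ F, a x = 0) ∧ (∀ x ∈ convexHull ℝ V, a x ≤ 0) ∧ 0 < a v) ∧
  (∀ F' : Set (E N), IsFacetOf V F' → F' ≠ F →
    ∀ a : E N →ᵃ[ℝ] ℝ, (∀ x ∈ F', a x = 0) → (∀ x ∈ convexHull ℝ V, a x ≤ 0) → a v ≤ 0)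

/-- `g` (the rows of an `n × (n-d-1)` matrix of full rank `n-d-1`) is a Gale dual of the
polytope with vertices `v 0, …, v (n-1)` in `ℝ^d`. -/
def IsGaleDual {d n : ℕ} (v : Fin n → E d) (g : Fin n → E (n - d - 1)) : Prop :=
  Submodule.span ℝ (Set.range g) = ⊤ ∧
  (∀ c : Fin (n - d - 1), (∑ i, g i c) = 0) ∧
  (∀ c : Fin (n - d - 1), (∑ i, g i c • v i) = 0)

/-- Radial projection to the unit sphere. -/
def sph {m : ℕ} (x : E m) : E m := ‖x‖⁻¹ • x

/-- The `i`-th point of the spherical Gale diagram is a double point. -/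
def IsDouble {m n : ℕ} (g : Fin n → E m) (i : Fin n) : Prop :=
  ∃ j : Fin n, j ≠ i ∧ sph (g j) = sph (g i)

/-- The `i`-th point of the spherical Gale diagram is antipodal. -/
def IsAnti {m n : ℕ} (g : Fin n → E m) (i : Fin n) : Prop :=
  ∃ j : Fin n, sph (g j) = -sph (g i)

/-- The class of model totally splittable polytopes: simplices, polygons, regular
crosspolytopes, prisms over simplices, and iterated joins of these. -/
inductive TSModel : (M : ℕ) → Set (E M) → Prop
  | simplex {M : ℕ} (V : Set (E M)) (h : IsPolytope V)
      (ha : AffineIndependent ℝ (fun x : V => (x : E M))) : TSModel M V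
  | polygon {M : ℕ} (V : Set (E M)) (h : IsPolytope V) (hd : adim V = 2) : TSModel M V
  | cross {M d : ℕ} (hd : 1 ≤ d) (f : E d →ᵃⁱ[ℝ] E M) : TSModel M (f '' crossVertices d)
  | prism {M d : ℕ} (hd : 2 ≤ d) (f : E d →ᵃⁱ[ℝ] E M) :
      TSModel M (f '' simplexPrismVertices d)
  | join {M : ℕ} (V₁ V₂ : Set (E M)) (h₁ : TSModel M V₁) (h₂ : TSModel M V₂)
      (hdisj : Disjoint V₁ V₂) (hskew : IsJoinPartition V₁ V₂) : TSModel M (V₁ ∪ V₂)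



/-! ### Affine dependences and weights -/

section

open Finset

/-- An affine dependence of the finite point set `s`, as a function vanishing off `s`. -/
def IsDep {N : ℕ} (s : Finset (E N)) (lam : E N → ℝ) : Prop :=
  (∀ v, v ∉ s → lam v = 0) ∧ ∑ v ∈ s, lam v = 0 ∧ ∑ v ∈ s, lam v • v = 0

/-- `w` is a system of affine coordinates of `x` with respect to `s`. -/
def IsWt {N : ℕ} (s : Finset (E N)) (w : E N → ℝ) (x : E N) : Prop :=
  (∀ v, v ∉ s → w v = 0) ∧ ∑ v ∈ s, w v = 1 ∧ ∑ v ∈ s, w v • v = x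

section Basics

variable {N : ℕ} {s : Finset (E N)}

lemma IsDep.smul {lam : E N → ℝ} (h : IsDep s lam) (c : ℝ) :
    IsDep s (fun v => c * lam v) := by
  refine ⟨fun v hv => by simp [h.1 v hv], ?_, ?_⟩
  · rw [← mul_sum, h.2.1, mul_zero]
  · simp_rw [mul_smul]; rw [← smul_sum, h.2.2, smul_zero]

lemma IsWt.sub {w w' : E N → ℝ} {x : E N} (h : IsWt s w x) (h' : IsWt s w' x) :
    IsDep s (fun v => w v - w' v) := by
  refine ⟨fun v hv => by simp [h.1 v hv, h'.1 v hv], ?_, ?_⟩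
  · rw [sum_sub_distrib, h.2.1, h'.2.1, sub_self]
  · simp_rw [sub_smul]; rw [sum_sub_distrib, h.2.2, h'.2.2, sub_self]

lemma IsWt.add_dep {w nu : E N → ℝ} {x : E N} (h : IsWt s w x) (h' : IsDep s nu) (c : ℝ) :
    IsWt s (fun v => w v + c * nu v) x := by
  refine ⟨fun v hv => by simp [h.1 v hv, h'.1 v hv], ?_, ?_⟩
  · rw [sum_add_distrib, ← mul_sum, h.2.1, h'.2.1]; simp
  · simp_rw [add_smul, mul_smul]; rw [sum_add_distrib, ← smul_sum, h.2.2, h'.2.2]; simp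

lemma IsWt.comb {w w' : E N → ℝ} {x x' : E N} (h : IsWt s w x) (h' : IsWt s w' x')
    {a b : ℝ} (hab : a + b = 1) :
    IsWt s (fun v => a * w v + b * w' v) (a • x + b • x') := by
  refine ⟨fun v hv => by simp [h.1 v hv, h'.1 v hv], ?_, ?_⟩
  · rw [sum_add_distrib, ← mul_sum, ← mul_sum, h.2.1, h'.2.1]; simpa using hab
  · simp_rw [add_smul, mul_smul]
    rw [sum_add_distrib, ← smul_sum, ← smul_sum, h.2.2, h'.2.2]

open Classical in
lemma isWt_single {v : E N} (hv : v ∈ s) : IsWt s (fun z => if z = v then 1 else 0) v := by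
  refine ⟨fun z hz => ?_, ?_, ?_⟩
  · exact if_neg (by rintro rfl; exact hz hv)
  · simp [hv]
  · simp [hv]

/-- Moving a point with coordinates `w` along `u - u'`. -/
lemma IsWt.transl {w wu wu' : E N → ℝ} {x u u' : E N} (h : IsWt s w x) (hu : IsWt s wu u)
    (hu' : IsWt s wu' u') (c : ℝ) :
    IsWt s (fun v => w v + c * (wu v - wu' v)) (x + c • (u - u')) := by
  refine ⟨fun v hv => by simp [h.1 v hv, hu.1 v hv, hu'.1 v hv], ?_, ?_⟩
  · rw [sum_add_distrib, ← mul_sum, sum_sub_distrib, h.2.1, hu.2.1, hu'.2.1]; simp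
  · simp_rw [add_smul, mul_smul, sub_smul]
    rw [sum_add_distrib, ← smul_sum, sum_sub_distrib, h.2.2, hu.2.2, hu'.2.2]

lemma mem_aff_iff {M : Set (E N)} (hM : M ⊆ s) {x : E N} :
    x ∈ affineSpan ℝ M ↔ ∃ w, IsWt s w x ∧ ∀ v, v ∉ M → w v = 0 := by
  classical
  constructor
  · intro hx
    refine affineSpan_induction (p := fun x => ∃ w, IsWt s w x ∧ ∀ v, v ∉ M → w v = 0) hx ?_ ?_
    · intro y hy
      refine ⟨_, isWt_single (hM hy), fun v hv => ?_⟩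
      rw [if_neg]; rintro rfl; exact hv hy
    · rintro c u v w ⟨wu, hu, hu0⟩ ⟨wv, hv, hv0⟩ ⟨ww, hw, hw0⟩
      refine ⟨fun z => ww z + c * (wu z - wv z), ?_, ?_⟩
      · have := hw.transl hu hv c
        rwa [add_comm] at this
      · intro z hz; simp [hu0 z hz, hv0 z hz, hw0 z hz]
  · rintro ⟨w, hw, h0⟩
    obtain ⟨v₀, hv₀⟩ : M.Nonempty := by
      by_contra hne
      rw [Set.not_nonempty_iff_eq_empty] at hne
      have : ∑ v ∈ s, w v = 0 := sum_eq_zero fun v _ => h0 v (by simp [hne])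
      rw [hw.2.1] at this; norm_num at this
    have hd : ∑ v ∈ s, w v • (v - v₀) ∈ (affineSpan ℝ M).direction := by
      refine Submodule.sum_mem _ fun v hv => ?_
      by_cases hvM : v ∈ M
      · exact Submodule.smul_mem _ _ (AffineSubspace.vsub_mem_direction
          (subset_affineSpan ℝ M hvM) (subset_affineSpan ℝ M hv₀))
      · simp [h0 v hvM]
    have := AffineSubspace.vadd_mem_of_mem_direction hd (subset_affineSpan ℝ M hv₀)
    simp_rw [smul_sub] at this
    rw [sum_sub_distrib, ← sum_smul, hw.2.1, hw.2.2] at this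
    simpa using this

lemma mem_conv_iff {M : Set (E N)} (hM : M ⊆ s) {x : E N} :
    x ∈ convexHull ℝ M ↔ ∃ w, IsWt s w x ∧ (∀ v, 0 ≤ w v) ∧ ∀ v, v ∉ M → w v = 0 := by
  classical
  constructor
  · intro hx
    refine convexHull_min (s := M)
      (t := {x | ∃ w, IsWt s w x ∧ (∀ v, 0 ≤ w v) ∧ ∀ v, v ∉ M → w v = 0}) ?_ ?_ hx
    · intro y hy
      refine ⟨_, isWt_single (hM hy), fun v => by split_ifs <;> norm_num, fun v hv => ?_⟩
      rw [if_neg]; rintro rfl; exact hv hy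
    · rintro u ⟨wu, hu, hup, hu0⟩ v ⟨wv, hv, hvp, hv0⟩ a b ha hb hab
      exact ⟨_, hu.comb hv hab,
        fun z => add_nonneg (mul_nonneg ha (hup z)) (mul_nonneg hb (hvp z)),
        fun z hz => by simp [hu0 z hz, hv0 z hz]⟩
  · rintro ⟨w, hw, hp, h0⟩
    have hf : ∀ v ∈ s, v ∉ s.filter (· ∈ M) → w v = 0 := fun v hv hv' =>
      h0 v fun h => hv' (by simp [h, hv])
    have h1 : ∑ v ∈ s.filter (· ∈ M), w v = 1 := by
      rw [sum_subset (filter_subset _ _) hf, hw.2.1]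
    have h2 : ∑ v ∈ s.filter (· ∈ M), w v • v = x := by
      rw [sum_subset (filter_subset _ _) fun v hv hv' => by rw [hf v hv hv', zero_smul], hw.2.2]
    rw [← h2]
    exact (convex_convexHull ℝ M).sum_mem (fun v _ => hp v) h1
      fun v hv => subset_convexHull ℝ M (by simpa using (mem_filter.1 hv).2)

lemma mem_conv_iff' {x : E N} :
    x ∈ convexHull ℝ (s : Set (E N)) ↔ ∃ w, IsWt s w x ∧ ∀ v, 0 ≤ w v := by
  rw [mem_conv_iff (s := s) subset_rfl]
  exact ⟨fun ⟨w, h, h', _⟩ => ⟨w, h, h'⟩, fun ⟨w, h, h'⟩ => ⟨w, h, h', fun v hv => h.1 v hv⟩⟩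

/-- A small multiple of `nu` can be added to `lam` without destroying strict positivity. -/
lemma exists_eps (s : Finset (E N)) (lam nu : E N → ℝ) :
    ∃ ε : ℝ, 0 < ε ∧ ε < 1 ∧ ∀ v ∈ s, 0 < lam v → 0 < lam v + ε * nu v ∧ 0 < lam v - ε * nu v := by
  have h : ∀ᶠ ε : ℝ in nhdsWithin 0 (Set.Ioi 0),
      ∀ v ∈ s, 0 < lam v → 0 < lam v + ε * nu v ∧ 0 < lam v - ε * nu v := by
    rw [Finset.eventually_all]
    intro v _
    by_cases hv : 0 < lam v
    · have c1 : Filter.Tendsto (fun ε : ℝ => lam v + ε * nu v) (nhdsWithin 0 (Set.Ioi 0))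
          (nhds (lam v)) := by
        have : Continuous (fun ε : ℝ => lam v + ε * nu v) := by fun_prop
        simpa using (this.tendsto 0).mono_left nhdsWithin_le_nhds
      have c2 : Filter.Tendsto (fun ε : ℝ => lam v - ε * nu v) (nhdsWithin 0 (Set.Ioi 0))
          (nhds (lam v)) := by
        have : Continuous (fun ε : ℝ => lam v - ε * nu v) := by fun_prop
        simpa using (this.tendsto 0).mono_left nhdsWithin_le_nhds
      filter_upwards [c1.eventually (lt_mem_nhds hv), c2.eventually (lt_mem_nhds hv)]
        with ε h1 h2 _ using ⟨h1, h2⟩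
    · exact Filter.Eventually.of_forall fun _ h => absurd h hv
  obtain ⟨ε, h1, h2⟩ := (h.and (Ioo_mem_nhdsGT (zero_lt_one (α := ℝ)))).exists
  exact ⟨ε, h2.1, h2.2, h1⟩

/-! ### Relative interior -/

lemma mem_relint_iff_ball {A : Set (E N)} {x : E N} :
    x ∈ intrinsicInterior ℝ A ↔
      x ∈ affineSpan ℝ A ∧ ∃ ε > 0, ∀ y ∈ affineSpan ℝ A, dist y x < ε → y ∈ A := by
  rw [mem_intrinsicInterior]
  constructor
  · rintro ⟨y, hy, rfl⟩
    rw [mem_interior_iff_mem_nhds, Metric.mem_nhds_iff] at hy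
    obtain ⟨ε, hε, hb⟩ := hy
    exact ⟨y.2, ε, hε, fun z hz hd => hb (a := ⟨z, hz⟩) hd⟩
  · rintro ⟨hx, ε, hε, h⟩
    refine ⟨⟨x, hx⟩, ?_, rfl⟩
    rw [mem_interior_iff_mem_nhds, Metric.mem_nhds_iff]
    exact ⟨ε, hε, fun z hz => h z z.2 hz⟩

/-- A point of a polytope, given by nonnegative weights `w`, is in the relative interior iff some
affine dependence is positive wherever `w` vanishes.  This is visible in the oriented matroid. -/
lemma mem_relint_iff {w : E N → ℝ} {x : E N} (hs : s.Nonempty) (hw : IsWt s w x)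
    (hp : ∀ v, 0 ≤ w v) :
    x ∈ intrinsicInterior ℝ (convexHull ℝ (s : Set (E N))) ↔
      ∃ nu, IsDep s nu ∧ ∀ v ∈ s, w v = 0 → 0 < nu v := by
  classical
  have hxP : x ∈ convexHull ℝ (s : Set (E N)) := mem_conv_iff'.2 ⟨w, hw, hp⟩
  constructor
  · intro hx
    obtain ⟨hxA, ε, hε, hb⟩ := mem_relint_iff_ball.1 hx
    -- the barycentre `c`, and a point `y` of the polytope beyond `x` on the ray from `c`
    have hcard : (0 : ℝ) < #s := by exact_mod_cast card_pos.2 hs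
    have hc : IsWt s (fun v => if v ∈ s then (#s : ℝ)⁻¹ else 0)
        (∑ v ∈ s, (if v ∈ s then (#s : ℝ)⁻¹ else 0) • v) := by
      refine ⟨fun v hv => by simp [hv], ?_, rfl⟩
      rw [sum_ite_mem, inter_self, sum_const, nsmul_eq_mul, mul_inv_cancel₀ hcard.ne']
    set wc : E N → ℝ := fun v => if v ∈ s then (#s : ℝ)⁻¹ else 0
    set c : E N := ∑ v ∈ s, wc v • v
    have hcP : c ∈ convexHull ℝ (s : Set (E N)) :=
      mem_conv_iff'.2 ⟨wc, hc, fun v => by simp only [wc]; split_ifs <;> positivity⟩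
    have hcA := subset_affineSpan ℝ _ hcP
    obtain ⟨δ, hδ, hδε⟩ : ∃ δ > 0, δ * ‖x - c‖ < ε := by
      refine ⟨ε / (‖x - c‖ + 1), by positivity, ?_⟩
      rw [div_mul_eq_mul_div, div_lt_iff₀ (by positivity)]
      nlinarith [norm_nonneg (x - c)]
    have hy : x + δ • (x - c) ∈ convexHull ℝ (s : Set (E N)) := by
      refine hb _ ?_ ?_
      · have := AffineSubspace.smul_vsub_vadd_mem (affineSpan ℝ (convexHull ℝ (s : Set (E N))))
          δ hxA hcA hxA
        rwa [vsub_eq_sub, vadd_eq_add, add_comm] at this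
      · rw [dist_eq_norm, add_sub_cancel_left, norm_smul, Real.norm_of_nonneg hδ.le]
        exact hδε
    obtain ⟨wy, hwy, hyp⟩ := mem_conv_iff'.1 hy
    have hz := hwy.comb hc (a := 1 / (1 + δ)) (b := δ / (1 + δ)) (by field_simp)
    have hzx : (1 / (1 + δ)) • (x + δ • (x - c)) + (δ / (1 + δ)) • c = x := by
      have h1 : (1 + δ) ≠ 0 := by positivity
      have : x = (1 / (1 + δ)) • ((1 + δ) • x) := by
        rw [smul_smul, one_div, inv_mul_cancel₀ h1, one_smul]
      conv_rhs => rw [this]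
      module
    rw [hzx] at hz
    refine ⟨_, hz.sub hw, fun v hv hv0 => ?_⟩
    have h3 : wc v = (#s : ℝ)⁻¹ := by simp [wc, hv]
    simp only [hv0, sub_zero, h3]
    have := hyp v
    positivity
  · rintro ⟨nu, hnu, hpos⟩
    -- some point `z` is in the relative interior; `x` lies strictly between `z` and a point `y`
    obtain ⟨z, hz⟩ := Set.Nonempty.intrinsicInterior (convex_convexHull ℝ (s : Set (E N)))
      (convexHull_nonempty_iff.2 hs.to_set)
    obtain ⟨wz, hwz, hzp⟩ := mem_conv_iff'.1 (intrinsicInterior_subset hz)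
    obtain ⟨hzA, ε, hε, hb⟩ := mem_relint_iff_ball.1 hz
    obtain ⟨η, hη, hη1, hη2⟩ := exists_eps s w nu
    have hw1 := hw.add_dep hnu η
    have hw1p : ∀ v ∈ s, 0 < w v + η * nu v := by
      intro v hv
      rcases (hp v).eq_or_lt with h | h
      · rw [← h, zero_add]; exact mul_pos hη (hpos v hv h.symm)
      · exact (hη2 v hv h).1
    obtain ⟨t, ht, ht1, ht2⟩ := exists_eps s (fun v => w v + η * nu v) wz
    have ht1' : 0 < 1 - t := by linarith
    have hwy := hw1.comb hwz (a := 1 / (1 - t)) (b := -t / (1 - t)) (by field_simp; ring)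
    have hyP : (1 / (1 - t)) • x + (-t / (1 - t)) • z ∈ convexHull ℝ (s : Set (E N)) := by
      refine mem_conv_iff'.2 ⟨_, hwy, fun v => ?_⟩
      by_cases hv : v ∈ s
      · have := (ht2 v hv (hw1p v hv)).2
        have e : 1 / (1 - t) * (w v + η * nu v) + -t / (1 - t) * wz v =
          (w v + η * nu v - t * wz v) / (1 - t) := by ring
        simp only [e]; positivity
      · exact (hwy.1 v hv).ge
    rw [mem_relint_iff_ball]
    refine ⟨subset_affineSpan ℝ _ hxP, t * ε, by positivity, fun p hpA hd => ?_⟩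
    have hq : z + t⁻¹ • (p - x) ∈ convexHull ℝ (s : Set (E N)) := by
      refine hb _ ?_ ?_
      · have := AffineSubspace.smul_vsub_vadd_mem (affineSpan ℝ (convexHull ℝ (s : Set (E N))))
          t⁻¹ hpA (subset_affineSpan ℝ _ hxP) hzA
        rwa [vsub_eq_sub, vadd_eq_add, add_comm] at this
      · rw [dist_eq_norm, add_sub_cancel_left, norm_smul, Real.norm_of_nonneg (by positivity),
          ← dist_eq_norm, inv_mul_lt_iff₀ ht]
        exact hd
    have := convex_convexHull ℝ (s : Set (E N)) hq hyP ht.le ht1'.le (by ring)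
    convert this using 1
    have h1 : (1 - t) ≠ 0 := ht1'.ne'
    rw [smul_add, smul_add, smul_smul, smul_smul, smul_smul, mul_inv_cancel₀ ht.ne',
      mul_div_cancel₀ _ h1, mul_div_cancel₀ _ h1]
    module

end Basics

/-! ### Edges -/

section Faces

variable {N : ℕ} {s : Finset (E N)}

/-- The oriented-matroid description of the edge `[u, w]`: a dependence which is nonnegative off
`{u, w}` vanishes off `{u, w}`. -/
def CombEdge (s : Finset (E N)) (u w : E N) : Prop :=
  ∀ nu, IsDep s nu → (∀ v ∈ s, v ≠ u → v ≠ w → 0 ≤ nu v) → ∀ v ∈ s, v ≠ u → v ≠ w → nu v = 0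

lemma IsDep.sum_mul_affine {nu : E N → ℝ} (h : IsDep s nu) (a : E N →ᵃ[ℝ] ℝ) :
    ∑ v ∈ s, nu v * a v = 0 := by
  have e : ∀ v, nu v * a v = a.linear (nu v • v) + nu v * a 0 := by
    intro v
    have : a v = a.linear v + a 0 := by
      conv_lhs => rw [AffineMap.decomp a]
      rfl
    rw [this, map_smul, smul_eq_mul]; ring
  simp_rw [e]
  rw [sum_add_distrib, ← map_sum, ← sum_mul, h.2.1, h.2.2]; simp

lemma vertex_of_mem_segment (hP : IsPolytope (s : Set (E N))) {z u w : E N} (hz : z ∈ s)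
    (hu : u ∈ convexHull ℝ (s : Set (E N))) (hw : w ∈ convexHull ℝ (s : Set (E N)))
    (h : z ∈ segment ℝ u w) : u = z ∨ w = z := by
  have hz' : z ∈ Set.extremePoints ℝ (convexHull ℝ (s : Set (E N))) := by
    rw [← hP.2.2]; exact hz
  exact (mem_extremePoints_iff_forall_segment.1 hz').2 u hu w hw h

lemma left_mem_of_isEdge (hP : IsPolytope (s : Set (E N))) {u w : E N}
    (h : IsEdge (s : Set (E N)) u w) : u ∈ s := by
  obtain ⟨huw, a, ha⟩ := h
  have hu : u ∈ Set.extremePoints ℝ (convexHull ℝ ({u, w} : Set (E N))) := by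
    by_contra hu
    have hsub : Set.extremePoints ℝ (convexHull ℝ ({u, w} : Set (E N))) ⊆ {w} := by
      intro z hz
      rcases extremePoints_convexHull_subset hz with rfl | h
      · exact absurd hz hu
      · exact h
    have hcomp : IsCompact (convexHull ℝ ({u, w} : Set (E N))) :=
      (Set.toFinite _).isCompact_convexHull (𝕜 := ℝ)
    have hkm := closure_convexHull_extremePoints hcomp (convex_convexHull ℝ _)
    have : convexHull ℝ ({u, w} : Set (E N)) ⊆ {w} := by
      rw [← hkm]
      refine closure_minimal (convexHull_min hsub (convex_singleton w)) isClosed_singleton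
    exact huw (this (subset_convexHull ℝ _ (by simp)))
  have hext : IsExtreme ℝ (convexHull ℝ (s : Set (E N))) (convexHull ℝ ({u, w} : Set (E N))) := by
    refine IsExposed.isExtreme fun _ => ⟨LinearMap.toContinuousLinearMap a.linear, ?_⟩
    rw [ha]
    ext x
    have e : ∀ x y, a y ≤ a x ↔ a.linear y ≤ a.linear x := by
      intro x y
      have h1 : ∀ v, a v = a.linear v + a 0 := by
        intro v
        conv_lhs => rw [AffineMap.decomp a]
        rfl
      rw [h1 x, h1 y]; simp
    simp [e]
  have := hext.extremePoints_subset_extremePoints hu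
  rw [← hP.2.2] at this
  exact this

lemma isEdge_symm {V : Set (E N)} {u w : E N} (h : IsEdge V u w) : IsEdge V w u :=
  ⟨h.1.symm, by rw [Set.pair_comm]; exact h.2⟩

lemma combEdge_of_isEdge (hP : IsPolytope (s : Set (E N))) {u w : E N}
    (h : IsEdge (s : Set (E N)) u w) : CombEdge s u w := by
  have hus := left_mem_of_isEdge hP h
  have hws := left_mem_of_isEdge hP (isEdge_symm h)
  obtain ⟨huw, a, ha⟩ := h
  intro nu hnu hpos z hz hzu hzw
  have huF : u ∈ convexHull ℝ ({u, w} : Set (E N)) := subset_convexHull ℝ _ (by simp)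
  have hwF : w ∈ convexHull ℝ ({u, w} : Set (E N)) := subset_convexHull ℝ _ (by simp)
  rw [ha] at huF hwF
  have haw : a w = a u := le_antisymm (huF.2 w hwF.1) (hwF.2 u huF.1)
  have hsum : ∑ v ∈ s, nu v * (a u - a v) = 0 := by
    simp_rw [mul_sub]
    rw [sum_sub_distrib, hnu.sum_mul_affine, ← sum_mul, hnu.2.1]; simp
  have hterm : ∀ v ∈ s, 0 ≤ nu v * (a u - a v) := by
    intro v hv
    by_cases h1 : v = u
    · simp [h1]
    by_cases h2 : v = w
    · simp [h2, haw]
    exact mul_nonneg (hpos v hv h1 h2) (sub_nonneg.2 (huF.2 v (subset_convexHull ℝ _ hv)))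
  have h0 := (sum_eq_zero_iff_of_nonneg hterm).1 hsum z hz
  rcases mul_eq_zero.1 h0 with h0 | h0
  · exact h0
  · exfalso
    have hzF : z ∈ convexHull ℝ ({u, w} : Set (E N)) := by
      rw [ha]
      refine ⟨subset_convexHull ℝ _ hz, fun y hy => ?_⟩
      rw [← sub_eq_zero.1 h0]; exact huF.2 y hy
    rw [convexHull_pair] at hzF
    rcases vertex_of_mem_segment hP hz huF.1 hwF.1 hzF with h | h
    · exact hzu h.symm
    · exact hzw h.symm

/-- The exposing functional of a combinatorial edge `[u, w]` separates the line through `u` and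
`w` from the convex hull of the other vertices. -/
lemma isEdge_of_combEdge {u w : E N} (hu : u ∈ s) (hw : w ∈ s) (huw : u ≠ w)
    (h : CombEdge s u w) : IsEdge (s : Set (E N)) u w := by
  classical
  refine ⟨huw, ?_⟩
  set K : Set (E N) := (s : Set (E N)) \ {u, w} with hK
  have hKs : K ⊆ s := Set.sdiff_subset
  have hLs : ({u, w} : Set (E N)) ⊆ s := by
    rintro z (rfl | rfl) <;> assumption
  have hdisj : Disjoint (convexHull ℝ K) (affineSpan ℝ ({u, w} : Set (E N)) : Set (E N)) := by
    rw [Set.disjoint_left]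
    intro x hxK hxL
    obtain ⟨k, hk, hkp, hk0⟩ := (mem_conv_iff hKs).1 hxK
    obtain ⟨l, hl, hl0⟩ := (mem_aff_iff hLs).1 hxL
    have hd := h _ (hk.sub hl) (fun v hv h1 h2 => by
      rw [hl0 v (by simp [h1, h2]), sub_zero]; exact hkp v)
    have hk00 : ∀ v ∈ s, k v = 0 := by
      intro v hv
      by_cases hv' : v ∈ K
      · have hne : v ≠ u ∧ v ≠ w := by
          simpa [hK, hv] using hv'
        have := hd v hv hne.1 hne.2
        rwa [hl0 v (by simp [hne.1, hne.2]), sub_zero] at this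
      · exact hk0 v hv'
    have := hk.2.1
    rw [sum_eq_zero hk00] at this
    norm_num at this
  obtain ⟨f, c, d, hf1, hcd, hf2⟩ := geometric_hahn_banach_compact_closed
    (convex_convexHull ℝ K) ((s.finite_toSet.subset hKs).isCompact_convexHull (𝕜 := ℝ))
    (affineSpan ℝ ({u, w} : Set (E N))).convex
    (AffineSubspace.closed_of_finiteDimensional _) hdisj
  have huL : u ∈ affineSpan ℝ ({u, w} : Set (E N)) := subset_affineSpan ℝ _ (by simp)
  have hwL : w ∈ affineSpan ℝ ({u, w} : Set (E N)) := subset_affineSpan ℝ _ (by simp)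
  -- `f` is bounded below on a line, hence constant there
  have hfuw : f w = f u := by
    by_contra hne
    have hne' : f w - f u ≠ 0 := sub_ne_zero.2 hne
    have hmem := AffineSubspace.smul_vsub_vadd_mem (affineSpan ℝ ({u, w} : Set (E N)))
      ((d - f u - 1) / (f w - f u)) hwL huL huL
    have := hf2 _ hmem
    rw [vsub_eq_sub, vadd_eq_add, map_add, map_smul, map_sub, smul_eq_mul,
      div_mul_cancel₀ _ hne'] at this
    linarith
  have hfu := hf2 u huL
  have hfs : ∀ v ∈ s, f v ≤ f u := by
    intro v hv
    by_cases h1 : v = u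
    · rw [h1]
    by_cases h2 : v = w
    · rw [h2, hfuw]
    have := hf1 v (subset_convexHull ℝ _ (by simp [hK, hv, h1, h2]))
    linarith
  have hfP : ∀ y ∈ convexHull ℝ (s : Set (E N)), f y ≤ f u := by
    intro y hy
    exact convexHull_min (t := {y | f y ≤ f u}) hfs
      (convex_halfSpace_le f.isLinear _) hy
  refine ⟨(f : E N →ₗ[ℝ] ℝ).toAffineMap, ?_⟩
  ext x
  simp only [LinearMap.coe_toAffineMap, ContinuousLinearMap.coe_coe, Set.mem_ofPred_eq]
  constructor
  · intro hx
    refine ⟨convexHull_mono hLs hx, fun y hy => ?_⟩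
    have : f x = f u := by
      refine convexHull_min (t := {y | f y = f u}) ?_ (convex_hyperplane f.isLinear _) hx
      rintro z (rfl | rfl)
      · rfl
      · exact hfuw
    rw [this]; exact hfP y hy
  · rintro ⟨hxP, hmax⟩
    have hfx : f x = f u := le_antisymm (hfP x hxP) (hmax u (subset_convexHull ℝ _ hu))
    obtain ⟨k, hk, hkp⟩ := mem_conv_iff'.1 hxP
    refine (mem_conv_iff hLs).2 ⟨k, hk, hkp, fun v hv => ?_⟩
    by_cases hvs : v ∈ s
    · have hsum : ∑ v ∈ s, k v * (f u - f v) = 0 := by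
        simp_rw [mul_sub]
        rw [sum_sub_distrib, ← sum_mul, hk.2.1]
        have : ∑ v ∈ s, k v * f v = f x := by
          rw [← hk.2.2, map_sum]; simp
        rw [this, hfx]; ring
      have h0 := (sum_eq_zero_iff_of_nonneg fun v hv =>
        mul_nonneg (hkp v) (sub_nonneg.2 (hfs v hv))).1 hsum v hvs
      rcases mul_eq_zero.1 h0 with h0 | h0
      · exact h0
      · have := hf1 v (subset_convexHull ℝ _ ⟨hvs, hv⟩)
        linarith
    · exact hk.1 v hvs

/-! ### Sections by hyperplanes that cut no edge -/

/-- Among the weights representing a point `x` of the polytope, some have maximal support. -/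
lemma exists_maximal_weights {x : E N} (hx : x ∈ convexHull ℝ (s : Set (E N))) :
    ∃ w, IsWt s w x ∧ (∀ v, 0 ≤ w v) ∧ ∀ w', IsWt s w' x → (∀ v, 0 ≤ w' v) →
      (∀ v, 0 < w v → 0 < w' v) → ∀ v, 0 < w' v → 0 < w v := by
  classical
  set C : Set (Finset (E N)) :=
    {T | ∃ w, IsWt s w x ∧ (∀ v, 0 ≤ w v) ∧ T = s.filter (fun v => 0 < w v)} with hC
  have hfin : C.Finite := by
    refine (s.powerset.finite_toSet).subset ?_
    rintro T ⟨w, _, _, rfl⟩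
    exact mem_coe.2 (mem_powerset.2 (filter_subset _ _))
  obtain ⟨w0, hw0, hp0⟩ := mem_conv_iff'.1 hx
  obtain ⟨T, ⟨w, hw, hp, rfl⟩, hmax⟩ := hfin.exists_maximal ⟨_, w0, hw0, hp0, rfl⟩
  refine ⟨w, hw, hp, fun w' hw' hp' hle v hv => ?_⟩
  have hvs : v ∈ s := by
    by_contra hvs
    exact hv.ne' (hw'.1 v hvs)
  have := hmax ⟨w', hw', hp', rfl⟩ (fun z hz => by
    rw [mem_filter] at hz ⊢
    exact ⟨hz.1, hle z hz.2⟩)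
  have := this (mem_filter.2 ⟨hvs, hv⟩)
  exact (mem_filter.1 this).2

lemma not_collinear_vertices (hP : IsPolytope (s : Set (E N))) {u w z : E N} (hu : u ∈ s)
    (hw : w ∈ s) (hz : z ∈ s) (huw : u ≠ w) (huz : u ≠ z) (hwz : w ≠ z) :
    ¬ Collinear ℝ ({u, w, z} : Set (E N)) := by
  intro hcol
  have sub := subset_convexHull ℝ (s : Set (E N))
  rcases hcol.wbtw_or_wbtw_or_wbtw with h | h | h
  · rcases vertex_of_mem_segment hP hw (sub hu) (sub hz) (mem_segment_iff_wbtw.2 h) with h | h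
    · exact huw h
    · exact hwz h.symm
  · rcases vertex_of_mem_segment hP hz (sub hw) (sub hu) (mem_segment_iff_wbtw.2 h) with h | h
    · exact hwz h
    · exact huz h
  · rcases vertex_of_mem_segment hP hu (sub hz) (sub hw) (mem_segment_iff_wbtw.2 h) with h | h
    · exact huz h.symm
    · exact huw h.symm

/-- The extreme points of `H ∩ P` lie on edges of `P` when `H` is a hyperplane; if `H` cuts no
edge, they are vertices of `P`. -/
lemma extreme_mem_vertices (hP : IsPolytope (s : Set (E N))) {H : AffineSubspace ℝ (E N)}
    (hHs : H ≤ affineSpan ℝ (s : Set (E N)))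
    (hdim : Module.finrank ℝ H.direction + 1 = adim (s : Set (E N)))
    (hno : ∀ u ∈ s, ∀ w ∈ s, u ≠ w → CombEdge s u w → ¬ StrictlySeparates H u w)
    {x : E N} (hx : x ∈ Set.extremePoints ℝ ((H : Set (E N)) ∩ convexHull ℝ (s : Set (E N)))) :
    x ∈ s := by
  classical
  by_contra hxs
  obtain ⟨⟨hxH, hxP⟩, hext⟩ := mem_extremePoints_iff_left.1 hx
  obtain ⟨lam, hlam, hp, hmax⟩ := exists_maximal_weights hxP
  -- moving along a direction of `H` spanned by support vertices contradicts extremality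
  have key : ∀ u ∈ s, 0 < lam u → ∀ w ∈ s, 0 < lam w → ∀ z ∈ s, 0 < lam z → ∀ α β : ℝ,
      α • (w - u) + β • (z - u) ∈ H.direction → α • (w - u) + β • (z - u) = 0 := by
    intro u hu hup w hw hwp z hz hzp α β hd
    set d := α • (w - u) + β • (z - u) with hdef
    set nu : E N → ℝ := fun v => α * ((if v = w then 1 else 0) - (if v = u then 1 else 0)) +
      β * ((if v = z then 1 else 0) - (if v = u then 1 else 0)) with hnu
    obtain ⟨ε, hε, -, hε2⟩ := exists_eps s lam nu
    have hzero : ∀ v, lam v = 0 → nu v = 0 := by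
      intro v hv
      have h1 : v ≠ u := by rintro rfl; exact hup.ne' hv
      have h2 : v ≠ w := by rintro rfl; exact hwp.ne' hv
      have h3 : v ≠ z := by rintro rfl; exact hzp.ne' hv
      simp [hnu, h1, h2, h3]
    have hmove : ∀ c : ℝ, IsWt s (fun v => lam v + c * nu v) (x + c • d) := by
      intro c
      have := (hlam.transl (isWt_single hw) (isWt_single hu) (c * α)).transl
        (isWt_single hz) (isWt_single hu) (c * β)
      convert this using 1
      · funext v; simp only [hnu]; ring
      · rw [hdef]; module
    have hin : ∀ c : ℝ, (c = ε ∨ c = -ε) →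
        x + c • d ∈ (H : Set (E N)) ∩ convexHull ℝ (s : Set (E N)) := by
      intro c hc
      refine ⟨?_, mem_conv_iff'.2 ⟨_, hmove c, fun v => ?_⟩⟩
      · have := AffineSubspace.vadd_mem_of_mem_direction (H.direction.smul_mem c hd) hxH
        rwa [vadd_eq_add, add_comm] at this
      · rcases (hp v).eq_or_lt with h | h
        · simp [← h, hzero v h.symm]
        · have hvs : v ∈ s := by
            by_contra hvs
            exact h.ne' (hlam.1 v hvs)
          have := hε2 v hvs h
          rcases hc with rfl | rfl
          · exact this.1.le
          · have := this.2
            linarith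
    have h1 := hext _ (hin ε (Or.inl rfl)) _ (hin (-ε) (Or.inr rfl))
      ⟨1 / 2, 1 / 2, by norm_num, by norm_num, by norm_num, by module⟩
    have h2 : ε • d = 0 := by simpa using h1
    exact (smul_eq_zero.1 h2).resolve_left hε.ne'
  -- there are two vertices in the support
  have hex1 : ∃ u ∈ s, 0 < lam u := by
    by_contra hcon
    push Not at hcon
    have : ∑ v ∈ s, lam v ≤ 0 := sum_nonpos hcon
    rw [hlam.2.1] at this; norm_num at this
  obtain ⟨u, hu, hup⟩ := hex1
  have hex2 : ∃ w ∈ s, w ≠ u ∧ 0 < lam w := by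
    by_contra hcon
    push Not at hcon
    have h0 : ∀ w ∈ s, w ≠ u → lam w = 0 := fun w hw hwu => le_antisymm (hcon w hw hwu) (hp w)
    have h1 : lam u = 1 := by
      rw [← hlam.2.1]
      exact (sum_eq_single_of_mem u hu h0).symm
    have h2 : lam u • u = x := by
      rw [← hlam.2.2]
      exact (sum_eq_single_of_mem (f := fun v => lam v • v) u hu fun w hw hwu => by
        simp only [h0 w hw hwu, zero_smul]).symm
    rw [h1, one_smul] at h2
    exact hxs (h2 ▸ hu)
  obtain ⟨w, hw, hwu, hwp⟩ := hex2
  -- and no third one, by a dimension count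
  have hthird : ∀ z ∈ s, z ≠ u → z ≠ w → lam z = 0 := by
    intro z hz hzu hzw
    by_contra hz0
    have hzp : 0 < lam z := lt_of_le_of_ne (hp z) (Ne.symm hz0)
    have hncol := not_collinear_vertices hP hu hw hz hwu.symm hzu.symm hzw.symm
    have hai := affineIndependent_iff_not_collinear_set.2 hncol
    have hfr := hai.finrank_vectorSpan (n := 2) (by simp)
    have hrange : Set.range ![u, w, z] = ({u, w, z} : Set (E N)) := by
      simp only [Matrix.range_cons, Matrix.range_empty, Set.union_empty, Set.singleton_union]
    rw [hrange] at hfr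
    have hndisj : ¬ Disjoint (vectorSpan ℝ ({u, w, z} : Set (E N))) H.direction := by
      intro hdis
      have e := Submodule.finrank_sup_add_finrank_inf_eq
        (vectorSpan ℝ ({u, w, z} : Set (E N))) H.direction
      rw [hdis.eq_bot, finrank_bot, add_zero, hfr] at e
      have hle : vectorSpan ℝ ({u, w, z} : Set (E N)) ⊔ H.direction ≤
          (affineSpan ℝ (s : Set (E N))).direction := by
        refine sup_le ?_ (AffineSubspace.direction_le hHs)
        rw [direction_affineSpan]
        refine vectorSpan_mono ℝ ?_
        rintro y (rfl | rfl | rfl) <;> assumption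
      have := Submodule.finrank_mono hle
      unfold adim at hdim
      omega
    refine hndisj (disjoint_iff.2 ((Submodule.eq_bot_iff _).2 fun d hd => ?_))
    obtain ⟨hd1, hd2⟩ := Submodule.mem_inf.1 hd
    rw [vectorSpan_eq_span_vsub_set_right ℝ (p := u) (by simp), Set.image_insert_eq,
      Set.image_pair, vsub_self, Submodule.span_insert_zero, Submodule.mem_span_pair] at hd1
    obtain ⟨α, β, rfl⟩ := hd1
    exact key u hu hup w hw hwp z hz hzp α β hd2
  have hedge : CombEdge s u w := by
    intro nu hnu hpos z hz hzu hzw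
    obtain ⟨ε, hε, -, hε2⟩ := exists_eps s lam nu
    have hstep : ∀ v ∈ s, 0 < lam v → 0 < lam v + ε * nu v := fun v hv h => (hε2 v hv h).1
    have hmem : ∀ v, 0 < lam v → v ∈ s := fun v h => by
      by_contra hvs; exact h.ne' (hlam.1 v hvs)
    have := hmax _ (hlam.add_dep hnu ε) (fun v => by
      by_cases hv : v ∈ s
      · by_cases h1 : v = u
        · exact (hstep v hv (h1 ▸ hup)).le
        by_cases h2 : v = w
        · exact (hstep v hv (h2 ▸ hwp)).le
        exact add_nonneg (hp v) (mul_nonneg hε.le (hpos v hv h1 h2))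
      · simp [hlam.1 v hv, hnu.1 v hv]) (fun v h => hstep v (hmem v h) h) z
    have hz0 := hthird z hz hzu hzw
    simp only [hz0, zero_add, lt_irrefl, imp_false, not_lt] at this
    exact le_antisymm (nonpos_of_mul_nonpos_right this hε) (hpos z hz hzu hzw)
  have hsum1 : lam u + lam w = 1 := by
    rw [← hlam.2.1]
    exact (sum_eq_add_of_mem u w hu hw hwu.symm fun c hc hne => hthird c hc hne.1 hne.2).symm
  have hsumx : lam u • u + lam w • w = x := by
    rw [← hlam.2.2]
    exact (sum_eq_add_of_mem (f := fun v => lam v • v) u w hu hw hwu.symm fun c hc hne => by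
      simp only [hthird c hc hne.1 hne.2, zero_smul]).symm
  have hxu : w - u ∉ H.direction := by
    intro hd
    have := key u hu hup w hw hwp w hw hwp 1 0 (by simpa using hd)
    simp [sub_eq_zero, hwu] at this
  have hxw : x - u = lam w • (w - u) := by
    rw [← hsumx, eq_sub_of_add_eq hsum1]; module
  have hxw' : w - x = lam u • (w - u) := by
    rw [← hsumx, eq_sub_of_add_eq' hsum1]; module
  refine hno u hu w hw hwu.symm hedge ⟨fun huH => hxu ?_, fun hwH => hxu ?_, x, ?_, hxH⟩
  · have := AffineSubspace.vsub_mem_direction hxH huH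
    rw [vsub_eq_sub, hxw] at this
    exact (Submodule.smul_mem_iff _ hwp.ne').1 this
  · have := AffineSubspace.vsub_mem_direction hwH hxH
    rw [vsub_eq_sub, hxw'] at this
    exact (Submodule.smul_mem_iff _ hup.ne').1 this
  · exact ⟨lam u, lam w, hup, hwp, hsum1, hsumx⟩

/-- A hyperplane that cuts no edge of `P` meets `P` in the convex hull of the vertices on it. -/
lemma inter_subset_conv (hP : IsPolytope (s : Set (E N))) {H : AffineSubspace ℝ (E N)}
    (hHs : H ≤ affineSpan ℝ (s : Set (E N)))
    (hdim : Module.finrank ℝ H.direction + 1 = adim (s : Set (E N)))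
    (hno : ∀ u ∈ s, ∀ w ∈ s, u ≠ w → CombEdge s u w → ¬ StrictlySeparates H u w) :
    (H : Set (E N)) ∩ convexHull ℝ (s : Set (E N)) ⊆
      convexHull ℝ ((s : Set (E N)) ∩ (H : Set (E N))) := by
  have hcomp : IsCompact ((H : Set (E N)) ∩ convexHull ℝ (s : Set (E N))) :=
    (s.finite_toSet.isCompact_convexHull (𝕜 := ℝ)).inter_left
      (AffineSubspace.closed_of_finiteDimensional H)
  have hkm := closure_convexHull_extremePoints hcomp (H.convex.inter (convex_convexHull ℝ _))
  rw [← hkm]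
  refine closure_minimal (convexHull_mono fun x hx => ?_)
    ((s.finite_toSet.subset Set.inter_subset_left).isCompact_convexHull (𝕜 := ℝ)).isClosed
  exact ⟨extreme_mem_vertices hP hHs hdim hno hx, (extremePoints_subset hx).1⟩

end Faces

/-! ### The combinatorial description of splits -/

section Splits

variable {N : ℕ} {s : Finset (E N)}

/-- `aff M` has codimension one in `aff s` iff adding one vertex off `aff M` to `M` spans `aff s`. -/
lemma hyperplane_iff {M : Set (E N)} (hM : M ⊆ s) (hne : M.Nonempty) :
    Module.finrank ℝ (affineSpan ℝ M).direction + 1 = adim (s : Set (E N)) ↔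
      ∃ v ∈ s, v ∉ affineSpan ℝ M ∧ ∀ u ∈ s, u ∈ affineSpan ℝ (insert v M) := by
  have hlt : ∀ v, v ∉ affineSpan ℝ M →
      Module.finrank ℝ (affineSpan ℝ (insert v M)).direction =
        Module.finrank ℝ (affineSpan ℝ M).direction + 1 := by
    intro v hv
    refine le_antisymm ?_ (Nat.succ_le_of_lt (Submodule.finrank_lt_finrank_of_lt ?_))
    · rw [direction_affineSpan, direction_affineSpan]
      exact finrank_vectorSpan_insert_le_set ℝ M v
    · refine AffineSubspace.direction_lt_of_nonempty ?_ (hne.mono (subset_affineSpan ℝ M))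
      refine lt_of_le_of_ne (affineSpan_mono ℝ (Set.subset_insert v M)) fun h => hv ?_
      rw [h]; exact subset_affineSpan ℝ _ (Set.mem_insert v M)
  unfold adim
  constructor
  · intro hdim
    have hex : ∃ v ∈ s, v ∉ affineSpan ℝ M := by
      by_contra hcon
      push Not at hcon
      have : affineSpan ℝ (s : Set (E N)) ≤ affineSpan ℝ M := affineSpan_le.2 hcon
      have := Submodule.finrank_mono (AffineSubspace.direction_le this)
      omega
    obtain ⟨v, hv, hvM⟩ := hex
    refine ⟨v, hv, hvM, fun u hu => ?_⟩
    have hle : affineSpan ℝ (insert v M) ≤ affineSpan ℝ (s : Set (E N)) :=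
      affineSpan_mono ℝ (Set.insert_subset hv hM)
    have heq : affineSpan ℝ (insert v M) = affineSpan ℝ (s : Set (E N)) := by
      by_contra hne'
      have := Submodule.finrank_lt_finrank_of_lt (AffineSubspace.direction_lt_of_nonempty
        (lt_of_le_of_ne hle hne') ⟨v, subset_affineSpan ℝ _ (Set.mem_insert v M)⟩)
      rw [hlt v hvM] at this
      omega
    rw [heq]; exact subset_affineSpan ℝ _ hu
  · rintro ⟨v, hv, hvM, h⟩
    have heq : affineSpan ℝ (insert v M) = affineSpan ℝ (s : Set (E N)) :=
      le_antisymm (affineSpan_mono ℝ (Set.insert_subset hv hM)) (affineSpan_le.2 h)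
    rw [← hlt v hvM, heq]

/-- `aff M` is a split hyperplane of `conv s`, expressed through affine dependences: `M` together
with one further vertex spans, some dependence is positive on all vertices off `aff M`, and no
combinatorial edge is cut. -/
def CombSplit (s : Finset (E N)) (M : Set (E N)) : Prop :=
  M.Nonempty ∧
  (∃ v ∈ s, v ∉ affineSpan ℝ M ∧ ∀ u ∈ s, u ∈ affineSpan ℝ (insert v M)) ∧
  (∃ nu, IsDep s nu ∧ ∀ v ∈ s, v ∉ affineSpan ℝ M → 0 < nu v) ∧
  ∀ u ∈ s, ∀ w ∈ s, u ≠ w → CombEdge s u w → ¬ StrictlySeparates (affineSpan ℝ M) u w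

lemma CombSplit.inter_subset_conv (hP : IsPolytope (s : Set (E N))) {M : Set (E N)}
    (hM : M ⊆ s) (h : CombSplit s M) :
    (affineSpan ℝ M : Set (E N)) ∩ convexHull ℝ (s : Set (E N)) ⊆
      convexHull ℝ ((s : Set (E N)) ∩ (affineSpan ℝ M : Set (E N))) :=
  TSP.inter_subset_conv hP (affineSpan_mono ℝ hM) ((hyperplane_iff hM h.1).2 h.2.1) h.2.2.2

lemma isSplitHyperplane_iff (hP : IsPolytope (s : Set (E N))) {M : Set (E N)} (hM : M ⊆ s) :
    IsSplitHyperplane (s : Set (E N)) (affineSpan ℝ M) ↔ CombSplit s M := by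
  classical
  have hs : s.Nonempty := by simpa using hP.2.1
  constructor
  · rintro ⟨hle, hdim, ⟨x, hxH, hx⟩, hno⟩
    have hne : M.Nonempty := (affineSpan_nonempty ℝ).1 ⟨x, hxH⟩
    have hno' : ∀ u ∈ s, ∀ w ∈ s, u ≠ w → CombEdge s u w →
        ¬ StrictlySeparates (affineSpan ℝ M) u w := fun u hu w hw huw he =>
      hno u w (isEdge_of_combEdge hu hw huw he)
    refine ⟨hne, (hyperplane_iff hM hne).1 hdim, ?_, hno'⟩
    have hxc := inter_subset_conv hP hle hdim hno' ⟨hxH, intrinsicInterior_subset hx⟩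
    obtain ⟨w, hw, hp, h0⟩ := (mem_conv_iff (s := s) Set.inter_subset_left).1 hxc
    obtain ⟨nu, hnu, hpos⟩ := (mem_relint_iff hs hw hp).1 hx
    exact ⟨nu, hnu, fun v hv hvM => hpos v hv (h0 v fun h => hvM h.2)⟩
  · intro h
    obtain ⟨hne, hhyp, ⟨nu, hnu, hpos⟩, hno⟩ := h
    refine ⟨affineSpan_mono ℝ hM, (hyperplane_iff hM hne).2 hhyp, ?_, fun u w he =>
      hno u (left_mem_of_isEdge hP he) w (left_mem_of_isEdge hP (isEdge_symm he)) he.1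
        (combEdge_of_isEdge hP he)⟩
    -- the barycentre of the vertices on `aff M`
    set T := s.filter (· ∈ affineSpan ℝ M) with hT
    have hTne : T.Nonempty := by
      obtain ⟨m, hm⟩ := hne
      exact ⟨m, mem_filter.2 ⟨hM hm, subset_affineSpan ℝ M hm⟩⟩
    have hcard : (0 : ℝ) < #T := by exact_mod_cast card_pos.2 hTne
    have hw : IsWt s (fun v => if v ∈ T then (#T : ℝ)⁻¹ else 0)
        (∑ v ∈ s, (if v ∈ T then (#T : ℝ)⁻¹ else 0) • v) := by
      refine ⟨fun v hv => if_neg fun h => hv (mem_filter.1 h).1, ?_, rfl⟩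
      rw [sum_ite_mem, inter_eq_right.2 (filter_subset _ _), sum_const, nsmul_eq_mul,
        mul_inv_cancel₀ hcard.ne']
    have hin : ∑ v ∈ s, (if v ∈ T then (#T : ℝ)⁻¹ else 0) • v ∈
        convexHull ℝ ((s : Set (E N)) ∩ (affineSpan ℝ M : Set (E N))) := by
      refine (mem_conv_iff (s := s) Set.inter_subset_left).2 ⟨_, hw,
        fun v => by split_ifs <;> positivity, fun v hv => if_neg fun h => hv ?_⟩
      exact ⟨(mem_filter.1 h).1, (mem_filter.1 h).2⟩
    refine ⟨_, convexHull_min Set.inter_subset_right (affineSpan ℝ M).convex hin,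
      (mem_relint_iff hs hw fun v => by split_ifs <;> positivity).2 ⟨nu, hnu, fun v hv h0 => ?_⟩⟩
    refine hpos v hv fun hvM => ?_
    rw [if_pos (mem_filter.2 ⟨hv, hvM⟩)] at h0
    exact (inv_pos.2 hcard).ne' h0

end Splits

/-! ### Transport along an equivalence of oriented matroids -/

section Transport

variable {N N' : ℕ} {s : Finset (E N)} {s' : Finset (E N')} {φ : E N → E N'} {ψ : E N' → E N}

/-- Every dependence on `s` has a dependence on `s'` with the same signs via `φ`. -/
def DepMap (s : Finset (E N)) (s' : Finset (E N')) (φ : E N → E N') : Prop :=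
  ∀ lam, IsDep s lam → ∃ mu, IsDep s' mu ∧
    ∀ v ∈ s, (0 < mu (φ v) ↔ 0 < lam v) ∧ (mu (φ v) < 0 ↔ lam v < 0)

/-- `φ` and `ψ` are mutually inverse bijections between `s` and `s'` which identify the signs of
affine dependences. -/
structure OMEquiv (s : Finset (E N)) (s' : Finset (E N')) (φ : E N → E N') (ψ : E N' → E N) :
    Prop where
  map : ∀ v ∈ s, φ v ∈ s'
  map' : ∀ v ∈ s', ψ v ∈ s
  left : ∀ v ∈ s, ψ (φ v) = v
  right : ∀ v ∈ s', φ (ψ v) = v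
  dep : DepMap s s' φ
  dep' : DepMap s' s ψ

lemma OMEquiv.symm (T : OMEquiv s s' φ ψ) : OMEquiv s' s ψ φ :=
  ⟨T.map', T.map, T.right, T.left, T.dep', T.dep⟩

lemma OMMap.depMap (h : OMMap (s : Set (E N)) (s' : Set (E N')) φ) : DepMap s s' φ := by
  have key : ∀ {K : ℕ} (t : Finset (E K)) (l : E K → ℝ), (∀ v, v ∉ t → l v = 0) →
      (∑ᶠ v, l v) = ∑ v ∈ t, l v ∧ (∑ᶠ v, l v • v) = ∑ v ∈ t, l v • v := by
    intro K t l hl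
    constructor
    · exact finsum_eq_sum_of_support_subset _ fun v hv => by
        by_contra hvt; exact hv (hl v hvt)
    · exact finsum_eq_sum_of_support_subset _ fun v hv => by
        by_contra hvt; exact hv (by simp [hl v hvt])
  intro lam hlam
  obtain ⟨mu, h0, h1, h2, h3⟩ := h lam hlam.1 (by rw [(key s lam hlam.1).1, hlam.2.1])
    (by rw [(key s lam hlam.1).2, hlam.2.2])
  refine ⟨mu, ⟨h0, by rw [← (key s' mu h0).1, h1], by rw [← (key s' mu h0).2, h2]⟩, ?_⟩
  intro v hv
  have := h3 v hv
  rcases lt_trichotomy (mu (φ v)) 0 with a | a | a <;>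
  rcases lt_trichotomy (lam v) 0 with b | b | b <;>
  simp only [a, b, Real.sign_of_neg, Real.sign_of_pos, Real.sign_zero] at this <;>
  first
  | (exfalso; norm_num at this; done)
  | (constructor <;> constructor <;> intro <;> linarith)

lemma OMEquiv.transfer (T : OMEquiv s s' φ ψ) {lam : E N → ℝ} (h : IsDep s lam) :
    ∃ mu, IsDep s' mu ∧
      (∀ v ∈ s, (0 < mu (φ v) ↔ 0 < lam v) ∧ (mu (φ v) < 0 ↔ lam v < 0)) ∧
      (∀ z ∈ s', (0 < mu z ↔ 0 < lam (ψ z)) ∧ (mu z < 0 ↔ lam (ψ z) < 0)) ∧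
      ∀ z ∈ s', lam (ψ z) = 0 → mu z = 0 := by
  obtain ⟨mu, hmu, hs⟩ := T.dep lam h
  have h2 : ∀ z ∈ s', (0 < mu z ↔ 0 < lam (ψ z)) ∧ (mu z < 0 ↔ lam (ψ z) < 0) := by
    intro z hz
    have := hs (ψ z) (T.map' z hz)
    rwa [T.right z hz] at this
  refine ⟨mu, hmu, hs, h2, fun z hz h0 => ?_⟩
  have := h2 z hz
  rw [h0] at this
  simp only [lt_irrefl, iff_false, not_lt] at this
  exact le_antisymm this.1 this.2

lemma OMEquiv.notMem_of_notMem_image (T : OMEquiv s s' φ ψ) {M : Set (E N)}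
    {z : E N'} (hz : z ∈ s') (h : z ∉ φ '' M) : ψ z ∉ M :=
  fun h' => h ⟨ψ z, h', T.right z hz⟩

lemma OMEquiv.image_subset (T : OMEquiv s s' φ ψ) {M : Set (E N)} (hM : M ⊆ s) :
    φ '' M ⊆ s' := by
  rintro _ ⟨v, hv, rfl⟩
  exact T.map v (hM hv)

lemma OMEquiv.image_image (T : OMEquiv s s' φ ψ) {M : Set (E N)} (hM : M ⊆ s) :
    ψ '' (φ '' M) = M := by
  rw [Set.image_image]
  ext v
  constructor
  · rintro ⟨u, hu, rfl⟩
    simpa [T.left u (hM hu)] using hu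
  · intro hv
    exact ⟨v, hv, T.left v (hM hv)⟩

lemma OMEquiv.mem_aff (T : OMEquiv s s' φ ψ) {M : Set (E N)} (hM : M ⊆ s) {v : E N}
    (hv : v ∈ s) (h : v ∈ affineSpan ℝ M) : φ v ∈ affineSpan ℝ (φ '' M) := by
  classical
  by_cases hvM : v ∈ M
  · exact subset_affineSpan ℝ _ (Set.mem_image_of_mem φ hvM)
  obtain ⟨w, hw, h0⟩ := (mem_aff_iff hM).1 h
  obtain ⟨mu, hmu, hs, hs', hz⟩ := T.transfer ((isWt_single hv).sub hw)
  have hpos : 0 < mu (φ v) := (hs v hv).1.2 (by simp [h0 v hvM])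
  refine (mem_aff_iff (T.image_subset hM)).2
    ⟨_, (isWt_single (T.map v hv)).add_dep hmu (-(mu (φ v))⁻¹), fun z hzM => ?_⟩
  by_cases hzs : z ∈ s'
  · by_cases hzv : z = φ v
    · subst hzv
      simp [hpos.ne']
    · have hne : ψ z ≠ v := by
        rintro rfl; exact hzv (T.right z hzs).symm
      simp [hzv, hz z hzs (by simp [hne, h0 _ (T.notMem_of_notMem_image hzs hzM)])]
  · have : z ≠ φ v := by rintro rfl; exact hzs (T.map v hv)
    simp [this, hmu.1 z hzs]

lemma OMEquiv.mem_aff_iff (T : OMEquiv s s' φ ψ) {M : Set (E N)} (hM : M ⊆ s) {v : E N}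
    (hv : v ∈ s) : φ v ∈ affineSpan ℝ (φ '' M) ↔ v ∈ affineSpan ℝ M := by
  refine ⟨fun h => ?_, T.mem_aff hM hv⟩
  have := T.symm.mem_aff (T.image_subset hM) (T.map v hv) h
  rwa [T.image_image hM, T.left v hv] at this

lemma OMEquiv.combEdge (T : OMEquiv s s' φ ψ) {u w : E N} (hu : u ∈ s) (hw : w ∈ s)
    (h : CombEdge s u w) : CombEdge s' (φ u) (φ w) := by
  intro nu hnu hpos z hz hzu hzw
  obtain ⟨mu, hmu, hs, hs', -⟩ := T.symm.transfer hnu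
  have hne : ∀ y ∈ s, ∀ v ∈ s', v ≠ φ y → ψ v ≠ y := by
    rintro y hy v hv hvy rfl
    exact hvy (T.right v hv).symm
  have h0 := h mu hmu (fun v hv hvu hvw => by
    have hφ : ∀ y ∈ s, v ≠ y → φ v ≠ φ y := fun y hy hvy he => hvy (by
      rw [← T.left v hv, he, T.left y hy])
    have h1 := hpos (φ v) (T.map v hv) (hφ u hu hvu) (hφ w hw hvw)
    by_contra hneg
    exact absurd ((hs' v hv).2.1 (not_le.1 hneg)) (not_lt.2 h1))
    (ψ z) (T.map' z hz) (hne u hu z hz hzu) (hne w hw z hz hzw)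
  have := hs z hz
  rw [h0] at this
  simp only [lt_irrefl, false_iff, not_lt] at this
  exact le_antisymm this.1 this.2

lemma OMEquiv.separates (T : OMEquiv s s' φ ψ) {M : Set (E N)} (hM : M ⊆ s) {u w : E N}
    (hu : u ∈ s) (hw : w ∈ s) (huw : u ≠ w) (h : StrictlySeparates (affineSpan ℝ M) u w) :
    StrictlySeparates (affineSpan ℝ (φ '' M)) (φ u) (φ w) := by
  classical
  obtain ⟨huM, hwM, x, ⟨a, b, ha, hb, hab, rfl⟩, hx⟩ := h
  refine ⟨fun h => huM ((T.mem_aff_iff hM hu).1 h), fun h => hwM ((T.mem_aff_iff hM hw).1 h), ?_⟩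
  have huM' : u ∉ M := fun h => huM (subset_affineSpan ℝ M h)
  have hwM' : w ∉ M := fun h => hwM (subset_affineSpan ℝ M h)
  have hφ : φ u ≠ φ w := fun h => huw (by rw [← T.left u hu, h, T.left w hw])
  obtain ⟨m, hm, h0⟩ := (TSP.mem_aff_iff hM).1 hx
  obtain ⟨mu, hmu, hs, hs', hz⟩ :=
    T.transfer (((isWt_single hu).comb (isWt_single hw) hab).sub hm)
  have hmu1 : 0 < mu (φ u) := (hs u hu).1.2 (by simp [h0 u huM', huw, ha])
  have hmu2 : 0 < mu (φ w) := (hs w hw).1.2 (by simp [h0 w hwM', huw.symm, hb])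
  set σ := mu (φ u) + mu (φ w) with hσ
  have hσ0 : 0 < σ := add_pos hmu1 hmu2
  have hsum : mu (φ u) / σ + mu (φ w) / σ = 1 := by rw [← add_div, div_self hσ0.ne']
  refine ⟨_, ⟨mu (φ u) / σ, mu (φ w) / σ, div_pos hmu1 hσ0, div_pos hmu2 hσ0, hsum, rfl⟩, ?_⟩
  refine (TSP.mem_aff_iff (T.image_subset hM)).2
    ⟨_, (((isWt_single (T.map u hu)).comb (isWt_single (T.map w hw)) hsum).add_dep hmu (-σ⁻¹)),
      fun z hzM => ?_⟩
  by_cases hzu : z = φ u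
  · subst hzu; simp [hφ]; ring
  by_cases hzw : z = φ w
  · subst hzw; simp [hφ.symm]; ring
  by_cases hzs : z ∈ s'
  · have h1 : ψ z ≠ u := by rintro rfl; exact hzu (T.right z hzs).symm
    have h2 : ψ z ≠ w := by rintro rfl; exact hzw (T.right z hzs).symm
    simp [hzu, hzw, hz z hzs (by simp [h1, h2, h0 _ (T.notMem_of_notMem_image hzs hzM)])]
  · simp [hzu, hzw, hmu.1 z hzs]

lemma OMEquiv.combSplit (T : OMEquiv s s' φ ψ) {M : Set (E N)} (hM : M ⊆ s)
    (h : CombSplit s M) : CombSplit s' (φ '' M) := by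
  obtain ⟨hne, ⟨v, hv, hvM, hspan⟩, ⟨nu, hnu, hpos⟩, hno⟩ := h
  have haff : ∀ z ∈ s', z ∉ affineSpan ℝ (φ '' M) → ψ z ∉ affineSpan ℝ M := by
    intro z hz hzM h
    rw [← T.mem_aff_iff hM (T.map' z hz), T.right z hz] at h
    exact hzM h
  refine ⟨hne.image φ, ⟨φ v, T.map v hv, fun h => hvM ((T.mem_aff_iff hM hv).1 h), ?_⟩, ?_, ?_⟩
  · intro z hz
    have := T.mem_aff (Set.insert_subset hv hM) (T.map' z hz) (hspan _ (T.map' z hz))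
    rwa [T.right z hz, Set.image_insert_eq] at this
  · obtain ⟨mu, hmu, -, hs', -⟩ := T.transfer hnu
    exact ⟨mu, hmu, fun z hz hzM => (hs' z hz).1.2 (hpos _ (T.map' z hz) (haff z hz hzM))⟩
  · intro u hu w hw huw he hsep
    have hne' : ψ u ≠ ψ w := fun h => huw (by rw [← T.right u hu, h, T.right w hw])
    have := T.symm.separates (T.image_subset hM) hu hw huw hsep
    rw [T.image_image hM] at this
    exact hno _ (T.map' u hu) _ (T.map' w hw) hne' (T.symm.combEdge hu hw he) this

/-- A common relative interior point of two split hyperplanes is a convex combination of vertices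
on either of them; the difference of the two sets of weights is a dependence, and its transport
produces such a point for the other polytope. -/
lemma OMEquiv.inter_nonempty (T : OMEquiv s s' φ ψ) (hP : IsPolytope (s : Set (E N)))
    {M₁ M₂ : Set (E N)} (hM₁ : M₁ ⊆ s) (hM₂ : M₂ ⊆ s) (h₁ : CombSplit s M₁)
    (h₂ : CombSplit s M₂)
    (h : ((affineSpan ℝ M₁ : Set (E N)) ∩ (affineSpan ℝ M₂ : Set (E N)) ∩
      intrinsicInterior ℝ (convexHull ℝ (s : Set (E N)))).Nonempty) :
    ((affineSpan ℝ (φ '' M₁) : Set (E N')) ∩ (affineSpan ℝ (φ '' M₂) : Set (E N')) ∩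
      intrinsicInterior ℝ (convexHull ℝ (s' : Set (E N')))).Nonempty := by
  classical
  have hs : s.Nonempty := by simpa using hP.2.1
  have hs' : s'.Nonempty := by
    obtain ⟨v, hv⟩ := hs
    exact ⟨φ v, T.map v hv⟩
  obtain ⟨x, ⟨hx₁, hx₂⟩, hx⟩ := h
  have hxP := intrinsicInterior_subset hx
  obtain ⟨l, hl, hlp, hl0⟩ := (mem_conv_iff (s := s) Set.inter_subset_left).1
    (h₁.inter_subset_conv hP hM₁ ⟨hx₁, hxP⟩)
  obtain ⟨m, hm, hmp, hm0⟩ := (mem_conv_iff (s := s) Set.inter_subset_left).1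
    (h₂.inter_subset_conv hP hM₂ ⟨hx₂, hxP⟩)
  obtain ⟨nu, hnu, hnup⟩ := (mem_relint_iff hs hl hlp).1 hx
  obtain ⟨mu, hmu, -, hsg, -⟩ := T.transfer (hl.sub hm)
  obtain ⟨nu', hnu', -, hsg', -⟩ := T.transfer hnu
  -- positive part of the transported dependence, plus all vertices on both hyperplanes
  set D : Finset (E N') :=
    s'.filter (fun z => z ∈ affineSpan ℝ (φ '' M₁) ∧ z ∈ affineSpan ℝ (φ '' M₂)) with hD
  set p : E N' → ℝ := fun z => max (mu z) 0 + if z ∈ D then 1 else 0 with hp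
  have hp0 : ∀ z, 0 ≤ p z := fun z => by
    simp only [hp]; split_ifs <;> positivity
  have hzl : ∀ z ∈ s', p z = 0 → l (ψ z) = 0 := by
    intro z hz hpz
    by_contra hne
    have hlz : 0 < l (ψ z) := lt_of_le_of_ne (hlp _) (Ne.symm hne)
    have hpz' : max (mu z) 0 + (if z ∈ D then (1 : ℝ) else 0) = 0 := hpz
    have hzD : z ∉ D := by
      intro hzD
      rw [if_pos hzD] at hpz'
      linarith [le_max_right (mu z) 0]
    rw [if_neg hzD, add_zero] at hpz'
    have hmz : ¬ 0 < mu z := not_lt.2 (by rw [← hpz']; exact le_max_left _ _)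
    rw [(hsg z hz).1] at hmz
    have hmm : 0 < m (ψ z) := by linarith
    have e1 : ψ z ∈ affineSpan ℝ M₁ := by
      by_contra hc; exact hne (hl0 _ fun h => hc h.2)
    have e2 : ψ z ∈ affineSpan ℝ M₂ := by
      by_contra hc; exact hmm.ne' (hm0 _ fun h => hc h.2)
    refine hzD (mem_filter.2 ⟨hz, ?_, ?_⟩)
    · have := T.mem_aff hM₁ (T.map' z hz) e1
      rwa [T.right z hz] at this
    · have := T.mem_aff hM₂ (T.map' z hz) e2
      rwa [T.right z hz] at this
  set σ := ∑ z ∈ s', p z with hσ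
  have hσ0 : 0 < σ := by
    refine lt_of_le_of_ne (sum_nonneg fun z _ => hp0 z) fun h0 => ?_
    have hall := (sum_eq_zero_iff_of_nonneg fun z _ => hp0 z).1 h0.symm
    have : ∑ v ∈ s, l v = 0 := sum_eq_zero fun v hv => by
      have := hzl (φ v) (T.map v hv) (hall _ (T.map v hv))
      rwa [T.left v hv] at this
    rw [hl.2.1] at this
    norm_num at this
  have hpw : IsWt s' (fun z => σ⁻¹ * p z) (∑ z ∈ s', (σ⁻¹ * p z) • z) := by
    refine ⟨fun z hz => ?_, ?_, rfl⟩
    · have : z ∉ D := fun h => hz (mem_filter.1 h).1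
      simp [hp, hmu.1 z hz, this]
    · rw [← mul_sum, inv_mul_cancel₀ hσ0.ne']
  refine ⟨_, ⟨(TSP.mem_aff_iff (s := s') (M := (s' : Set (E N')) ∩ affineSpan ℝ (φ '' M₁))
    Set.inter_subset_left).2 ⟨_, hpw, ?_⟩ |> affineSpan_le.2 Set.inter_subset_right, ?_⟩, ?_⟩
  · intro z hz
    by_cases hzs : z ∈ s'
    · have hzM : z ∉ affineSpan ℝ (φ '' M₁) := fun h => hz ⟨hzs, h⟩
      have hzD : z ∉ D := fun h => hzM (mem_filter.1 h).2.1
      have : l (ψ z) = 0 := hl0 _ fun h => hzM (by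
        have := T.mem_aff hM₁ (T.map' z hzs) h.2
        rwa [T.right z hzs] at this)
      have hneg : ¬ 0 < mu z := by
        rw [(hsg z hzs).1, this]; simpa using hmp _
      simp [hp, hzD, not_lt.1 hneg]
    · exact hpw.1 z hzs
  · -- the same point, represented by the negative part
    refine affineSpan_le.2 Set.inter_subset_right ((TSP.mem_aff_iff (s := s')
      (M := (s' : Set (E N')) ∩ affineSpan ℝ (φ '' M₂)) Set.inter_subset_left).2
      ⟨_, hpw.add_dep hmu (-σ⁻¹), ?_⟩)
    intro z hz
    by_cases hzs : z ∈ s'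
    · have hzM : z ∉ affineSpan ℝ (φ '' M₂) := fun h => hz ⟨hzs, h⟩
      have hzD : z ∉ D := fun h => hzM (mem_filter.1 h).2.2
      have : m (ψ z) = 0 := hm0 _ fun h => hzM (by
        have := T.mem_aff hM₂ (T.map' z hzs) h.2
        rwa [T.right z hzs] at this)
      have hneg : ¬ mu z < 0 := by
        rw [(hsg z hzs).2, this]; simpa using hlp _
      simp [hp, hzD, not_lt.1 hneg]
    · exact (hpw.add_dep hmu (-σ⁻¹)).1 z hzs
  · refine (mem_relint_iff hs' hpw fun z => mul_nonneg (inv_nonneg.2 hσ0.le) (hp0 z)).2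
      ⟨nu', hnu', fun z hz h0 => (hsg' z hz).1.2 (hnup _ (T.map' z hz) (hzl z hz ?_))⟩
    exact (mul_eq_zero.1 h0).resolve_left (inv_ne_zero hσ0.ne')

end Transport

end

/-- Splits and their compatibility only depend on the oriented matroid. -/
theorem splits_depend_only_on_oriented_matroid {N N' : ℕ}
    (V : Set (E N)) (V' : Set (E N')) (hV : IsPolytope V) (hV' : IsPolytope V')
    (φ : E N → E N') (ψ : E N' → E N)
    (hbij : Set.BijOn φ V V')
    (hinv₁ : ∀ v ∈ V, ψ (φ v) = v) (hinv₂ : ∀ u ∈ V', φ (ψ u) = u)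
    (hom : OMMap V V' φ) (hom' : OMMap V' V ψ) :
    (∀ M : Set (E N), M ⊆ V →
      (IsSplitHyperplane V (affineSpan ℝ M) ↔
        IsSplitHyperplane V' (affineSpan ℝ (φ '' M)))) ∧
    (∀ M₁ M₂ : Set (E N), M₁ ⊆ V → M₂ ⊆ V →
      IsSplitHyperplane V (affineSpan ℝ M₁) →
      IsSplitHyperplane V (affineSpan ℝ M₂) →
      (((affineSpan ℝ M₁ : Set (E N)) ∩ (affineSpan ℝ M₂ : Set (E N)) ∩
          intrinsicInterior ℝ (convexHull ℝ V) = ∅) ↔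
        ((affineSpan ℝ (φ '' M₁) : Set (E N')) ∩ (affineSpan ℝ (φ '' M₂) : Set (E N')) ∩
          intrinsicInterior ℝ (convexHull ℝ V') = ∅))) := by
  obtain ⟨s, rfl⟩ := hV.1.exists_finset_coe
  obtain ⟨s', rfl⟩ := hV'.1.exists_finset_coe
  have T : OMEquiv s s' φ ψ := by
    refine ⟨fun v hv => hbij.mapsTo hv, fun u hu => ?_, hinv₁, hinv₂, OMMap.depMap hom,
      OMMap.depMap hom'⟩
    obtain ⟨v, hv, rfl⟩ := hbij.surjOn hu
    rw [hinv₁ v hv]; exact hv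
  refine ⟨fun M hM => ?_, fun M₁ M₂ hM₁ hM₂ h₁ h₂ => ?_⟩
  · rw [isSplitHyperplane_iff hV hM, isSplitHyperplane_iff hV' (T.image_subset hM)]
    refine ⟨T.combSplit hM, fun h => ?_⟩
    have := T.symm.combSplit (T.image_subset hM) h
    rwa [T.image_image hM] at this
  · rw [isSplitHyperplane_iff hV hM₁] at h₁
    rw [isSplitHyperplane_iff hV hM₂] at h₂
    rw [← not_iff_not, ← Ne, ← Ne, ← Set.nonempty_iff_ne_empty, ← Set.nonempty_iff_ne_empty]
    refine ⟨T.inter_nonempty hV hM₁ hM₂ h₁ h₂, fun h => ?_⟩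
    have := T.symm.inter_nonempty hV' (T.image_subset hM₁) (T.image_subset hM₂)
      (T.combSplit hM₁ h₁) (T.combSplit hM₂ h₂) h
    rwa [T.image_image hM₁, T.image_image hM₂] at this

end TSP
end
end

section
/- Let d ≥ 2 and let P = conv{±e_1, …, ±e_d} ⊂ ℝ^d be the regular d-dimensional crosspolytope. An affine hyperplane H ⊂ ℝ^d is a split hyperplane of P if and only if H = {x ∈ ℝ^d : x_i = 0} for some i ∈ {1, …, d}. Moreover, any two distinct split hyperplanes of P intersect in the interior of P; in particular no two splits of P are compatible. -/
/-!
Write a hyperplane through an interior point `p` of the crosspolytope as `{x | f x = f p}` with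
`f ≠ 0` linear. Since `p` is interior, some vertex lies strictly on each side
(`exists_vertex_gt`). Two vertices of the crosspolytope are adjacent unless they are antipodal
(`isEdge_cross`; the edge `[s eᵢ, t eⱼ]` is exposed by `s xᵢ + t xⱼ`, because the polytope lies in
the unit `ℓ¹` ball). Hence, for a split, the two vertices found are `± eᵢ`, and every other vertex,
being adjacent to both, lies on the hyperplane. As `d ≥ 2`, a pair `± eⱼ` on the hyperplane
gives `f p = 0`, and `f` vanishes on all `eⱼ`, `j ≠ i`: the hyperplane is `xᵢ = 0`
(`coordinate_of_split`).

Conversely, a face meeting both sides of `xᵢ = 0` contains `eᵢ` and `-eᵢ` (`vertex_mem_face`), hence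
the centre, hence all vertices, so it is not a segment (`not_edge_of_pos_neg`). All coordinate
hyperplanes contain the origin, which is an interior point (`zero_mem_interior`).
-/

open scoped BigOperators

noncomputable section

namespace TSP

/-! ### Edges of the crosspolytope -/

/-- An upper bound for an affine functional on `V` persists on the convex hull of `V`. -/
lemma affine_le_of_mem_hull {N : ℕ} {V : Set (E N)} (a : E N →ᵃ[ℝ] ℝ) {M : ℝ}
    (h : ∀ v ∈ V, a v ≤ M) {x : E N} (hx : x ∈ convexHull ℝ V) : a x ≤ M := by
  have hc : Convex ℝ {x : E N | a x ≤ M} := (convex_Iic M).affine_preimage a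
  exact convexHull_min h hc hx

/-- The functional `x ↦ s • x i + t • x j`, which for signs `s`, `t` and `i ≠ j` exposes the edge
`[s eᵢ, t eⱼ]` of the crosspolytope. -/
def edgeFunctional {d : ℕ} (i j : Fin d) (s t : ℝ) : E d →ᵃ[ℝ] ℝ :=
  (s • (EuclideanSpace.proj i : E d →L[ℝ] ℝ).toLinearMap +
    t • (EuclideanSpace.proj j : E d →L[ℝ] ℝ).toLinearMap).toAffineMap

lemma edgeFunctional_apply {d : ℕ} (i j : Fin d) (s t : ℝ) (x : E d) :
    edgeFunctional i j s t x = s * x i + t * x j := by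
  simp [edgeFunctional]

lemma smul_single_mem {d : ℕ} (i : Fin d) {s : ℝ} (hs : s = 1 ∨ s = -1) :
    s • EuclideanSpace.single i (1 : ℝ) ∈ crossVertices d := by
  rcases hs with rfl | rfl
  · exact ⟨i, Or.inl (one_smul _ _)⟩
  · exact ⟨i, Or.inr (by rw [neg_smul, one_smul])⟩

lemma mem_cross_iff {d : ℕ} {v : E d} :
    v ∈ crossVertices d ↔
      ∃ i : Fin d, ∃ s : ℝ, (s = 1 ∨ s = -1) ∧ v = s • EuclideanSpace.single i (1 : ℝ) := by
  constructor
  · rintro ⟨i, h | h⟩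
    · exact ⟨i, 1, Or.inl rfl, by rw [h, one_smul]⟩
    · exact ⟨i, -1, Or.inr rfl, by rw [h, neg_smul, one_smul]⟩
  · rintro ⟨i, s, hs, rfl⟩
    exact smul_single_mem i hs

/-- The crosspolytope lies in the unit ball of the `ℓ¹` norm. -/
lemma sum_abs_le_one {d : ℕ} {x : E d} (hx : x ∈ convexHull ℝ (crossVertices d)) :
    ∑ k, |x k| ≤ 1 := by
  have hc : Convex ℝ {x : E d | ∑ k, |x k| ≤ 1} := by
    intro x hx y hy a b ha hb hab
    simp only [Set.mem_ofPred_eq] at hx hy ⊢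
    calc ∑ k, |(a • x + b • y) k| ≤ ∑ k, (a * |x k| + b * |y k|) := by
          apply Finset.sum_le_sum
          intro k _
          simp only [PiLp.add_apply, PiLp.smul_apply, smul_eq_mul]
          refine (abs_add_le _ _).trans ?_
          rw [abs_mul, abs_mul, abs_of_nonneg ha, abs_of_nonneg hb]
      _ = a * ∑ k, |x k| + b * ∑ k, |y k| := by
          rw [Finset.sum_add_distrib, Finset.mul_sum, Finset.mul_sum]
      _ ≤ 1 := by nlinarith
  refine convexHull_min ?_ hc hx
  intro v hv
  obtain ⟨i, s, hs, rfl⟩ := mem_cross_iff.1 hv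
  have : |s| = 1 := by rcases hs with rfl | rfl <;> simp
  simp [this, apply_ite abs]

/-- Any two vertices of the crosspolytope that are not antipodal are joined by an edge. -/
lemma isEdge_cross {d : ℕ} {i j : Fin d} (hij : i ≠ j) {s t : ℝ}
    (hs : s = 1 ∨ s = -1) (ht : t = 1 ∨ t = -1) :
    IsEdge (crossVertices d) (s • EuclideanSpace.single i (1 : ℝ))
      (t • EuclideanSpace.single j (1 : ℝ)) := by
  have hss : s * s = 1 := by rcases hs with rfl | rfl <;> norm_num
  have htt : t * t = 1 := by rcases ht with rfl | rfl <;> norm_num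
  have hsa : ∀ y : ℝ, s * y ≤ |y| := by
    intro y; rcases hs with rfl | rfl
    · simpa using le_abs_self y
    · simpa using neg_le_abs y
  have hta : ∀ y : ℝ, t * y ≤ |y| := by
    intro y; rcases ht with rfl | rfl
    · simpa using le_abs_self y
    · simpa using neg_le_abs y
  have hsum : ∀ x : E d, |x i| + |x j| + ∑ k ∈ (Finset.univ.erase i).erase j, |x k|
      = ∑ k, |x k| := by
    intro x
    rw [add_assoc, Finset.add_sum_erase (Finset.univ.erase i) (fun k => |x k|)
      (by simp [hij.symm]), Finset.add_sum_erase Finset.univ (fun k => |x k|) (by simp)]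
  have hrest : ∀ x : E d, 0 ≤ ∑ k ∈ (Finset.univ.erase i).erase j, |x k| :=
    fun x => Finset.sum_nonneg fun _ _ => abs_nonneg _
  have hle : ∀ y ∈ convexHull ℝ (crossVertices d), edgeFunctional i j s t y ≤ 1 := by
    intro y hy
    rw [edgeFunctional_apply]
    linarith [hsa (y i), hta (y j), sum_abs_le_one hy, hsum y, hrest y]
  have hu : edgeFunctional i j s t (s • EuclideanSpace.single i (1 : ℝ)) = 1 := by
    simp [edgeFunctional_apply, hij.symm, hss]
  have hw : edgeFunctional i j s t (t • EuclideanSpace.single j (1 : ℝ)) = 1 := by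
    simp [edgeFunctional_apply, hij, htt]
  refine ⟨?_, edgeFunctional i j s t, ?_⟩
  · intro h
    have := congrArg (fun x : E d => x i) h
    simp [hij] at this
    rw [this] at hss; norm_num at hss
  · ext x
    simp only [Set.mem_ofPred_eq]
    constructor
    · intro hx
      refine ⟨convexHull_mono ?_ hx, ?_⟩
      · rintro v (rfl | rfl)
        exacts [smul_single_mem i hs, smul_single_mem j ht]
      · intro y hy
        have h1 : Convex ℝ {x : E d | 1 ≤ edgeFunctional i j s t x} :=
          (convex_Ici (1 : ℝ)).affine_preimage _
        have h2 : (1 : ℝ) ≤ edgeFunctional i j s t x := by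
          refine convexHull_min ?_ h1 hx
          rintro v (rfl | rfl)
          exacts [hu.ge, hw.ge]
        exact (hle y hy).trans h2
    · rintro ⟨hx, hmax⟩
      have h1 : (1 : ℝ) ≤ s * x i + t * x j := by
        have := hmax _ (subset_convexHull ℝ _ (smul_single_mem i hs))
        rwa [hu, edgeFunctional_apply] at this
      have hx1 := sum_abs_le_one hx
      have e1 := hsa (x i)
      have e2 := hta (x j)
      have e3 := hsum x
      have e4 := hrest x
      -- The `ℓ¹` bound is attained by the two coordinates `i`, `j`, so the others vanish.
      have hzero : ∑ k ∈ (Finset.univ.erase i).erase j, |x k| = 0 := by linarith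
      rw [Finset.sum_eq_zero_iff_of_nonneg (fun _ _ => abs_nonneg _)] at hzero
      rw [convexHull_pair]
      refine ⟨s * x i, t * x j, ?_, ?_, by linarith, ?_⟩
      · have := abs_nonneg (x i); linarith
      · have := abs_nonneg (x j); linarith
      · ext k
        simp only [PiLp.add_apply, PiLp.smul_apply, smul_eq_mul, PiLp.single_apply]
        by_cases hki : k = i
        · subst hki
          simp only [if_true, if_neg hij]
          linear_combination x k * hss
        · by_cases hkj : k = j
          · subst hkj
            simp only [if_true, if_neg hki]
            linear_combination x k * htt
          · have := hzero k (by simp [hki, hkj])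
            simp [hki, hkj, abs_eq_zero.1 this]

/-! ### Dimension and interior -/

lemma affineSpan_cross {d : ℕ} (hd : 2 ≤ d) : affineSpan ℝ (crossVertices d) = ⊤ := by
  set S := affineSpan ℝ (crossVertices d)
  have hm : ∀ (i : Fin d) (s : ℝ), (s = 1 ∨ s = -1) →
      s • EuclideanSpace.single i (1 : ℝ) ∈ S :=
    fun i s hs => subset_affineSpan ℝ _ (smul_single_mem i hs)
  have hne : (S : Set (E d)).Nonempty := ⟨_, hm ⟨0, by omega⟩ 1 (Or.inl rfl)⟩
  rw [← AffineSubspace.direction_eq_top_iff_of_nonempty hne, eq_top_iff,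
    ← (EuclideanSpace.basisFun (Fin d) ℝ).toBasis.span_eq, Submodule.span_le]
  rintro _ ⟨i, rfl⟩
  have h := S.direction.smul_mem (1 / 2 : ℝ)
    (AffineSubspace.vsub_mem_direction (hm i 1 (Or.inl rfl)) (hm i (-1) (Or.inr rfl)))
  convert h using 1
  simp only [OrthonormalBasis.coe_toBasis, EuclideanSpace.basisFun_apply, vsub_eq_sub, ← sub_smul,
    smul_smul]
  norm_num

lemma adim_cross {d : ℕ} (hd : 2 ≤ d) : adim (crossVertices d) = d := by
  rw [adim, affineSpan_cross hd, AffineSubspace.direction_top, finrank_top]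
  simp

lemma intrinsicInterior_cross {d : ℕ} (hd : 2 ≤ d) :
    intrinsicInterior ℝ (convexHull ℝ (crossVertices d)) =
      interior (convexHull ℝ (crossVertices d)) := by
  refine subset_antisymm (interior_maximal intrinsicInterior_subset ?_)
    interior_subset_intrinsicInterior
  have hopen : IsOpen (affineSpan ℝ (convexHull ℝ (crossVertices d)) : Set (E d)) := by
    rw [affineSpan_convexHull, affineSpan_cross hd]
    exact isOpen_univ
  exact hopen.isOpenMap_subtype_val _ isOpen_interior

lemma zero_mem_interior {d : ℕ} (hd : 2 ≤ d) :
    (0 : E d) ∈ interior (convexHull ℝ (crossVertices d)) := by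
  obtain ⟨p, hp⟩ := interior_convexHull_nonempty_iff_affineSpan_eq_top.2 (affineSpan_cross hd)
  have hneg : -crossVertices d = crossVertices d := by
    ext v
    simp only [Set.mem_neg, mem_cross_iff]
    constructor
    · rintro ⟨i, s, hs, h⟩
      exact ⟨i, -s, by rcases hs with rfl | rfl <;> simp, by rw [neg_smul, ← h, neg_neg]⟩
    · rintro ⟨i, s, hs, h⟩
      exact ⟨i, -s, by rcases hs with rfl | rfl <;> simp, by rw [neg_smul, ← h]⟩
  have hp' : -p ∈ interior (convexHull ℝ (crossVertices d)) := by
    have := (Homeomorph.neg (E d)).preimage_interior (convexHull ℝ (crossVertices d))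
    have hpre : (Homeomorph.neg (E d)) ⁻¹' convexHull ℝ (crossVertices d) =
        convexHull ℝ (crossVertices d) := by
      conv_rhs => rw [← hneg, convexHull_neg]
      rfl
    rw [hpre] at this
    exact this.ge hp
  have := (convex_convexHull ℝ (crossVertices d)).interior hp hp'
    (show (0 : ℝ) ≤ 1 / 2 by norm_num) (show (0 : ℝ) ≤ 1 / 2 by norm_num) (by norm_num)
  simpa using this

/-! ### Split hyperplanes are coordinate hyperplanes -/

/-- A linear functional that is positive somewhere does not attain its maximum over the
crosspolytope at an interior point, so some vertex has a larger value. -/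
lemma exists_vertex_gt {d : ℕ} {p v : E d} (hp : p ∈ interior (convexHull ℝ (crossVertices d)))
    (f : E d →ₗ[ℝ] ℝ) (hv : 0 < f v) : ∃ u ∈ crossVertices d, f p < f u := by
  by_contra! hcon
  have hlim : Filter.Tendsto (fun ε : ℝ => p + ε • v) (nhdsWithin 0 (Set.Ioi 0)) (nhds p) := by
    have : Continuous (fun ε : ℝ => p + ε • v) := by fun_prop
    simpa using (this.tendsto 0).mono_left nhdsWithin_le_nhds
  have h1 := hlim.eventually (isOpen_interior.mem_nhds hp)
  obtain ⟨ε, hε, hpos⟩ := (h1.and self_mem_nhdsWithin).exists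
  have := affine_le_of_mem_hull f.toAffineMap hcon (interior_subset hε)
  simp only [LinearMap.coe_toAffineMap, map_add, map_smul, smul_eq_mul] at this
  nlinarith [mul_pos (show (0 : ℝ) < ε from hpos) hv]

/-- Endpoints with values of opposite sign under `f - f p` are strictly separated by the level
set of `f` through `p`. -/
lemma strictlySeparates_of_lt {d : ℕ} {H : AffineSubspace ℝ (E d)} {p : E d}
    {f : E d →ₗ[ℝ] ℝ} (hH : ∀ x, x ∈ H ↔ f x = f p) {u w : E d}
    (hu : f p < f u) (hw : f w < f p) : StrictlySeparates H u w := by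
  refine ⟨fun h => hu.ne' ((hH u).1 h), fun h => hw.ne ((hH w).1 h), ?_⟩
  have hpos : 0 < f u - f w := by linarith
  refine ⟨((f p - f w) / (f u - f w)) • u + ((f u - f p) / (f u - f w)) • w,
    ⟨_, _, div_pos (by linarith) hpos, div_pos (by linarith) hpos, ?_, rfl⟩, ?_⟩
  · field_simp; ring
  · rw [SetLike.mem_coe, hH]
    simp only [map_add, map_smul, smul_eq_mul]
    field_simp; ring

lemma StrictlySeparates.symm {d : ℕ} {H : AffineSubspace ℝ (E d)} {u w : E d}
    (h : StrictlySeparates H u w) : StrictlySeparates H w u := by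
  obtain ⟨h1, h2, h3⟩ := h
  exact ⟨h2, h1, by rwa [openSegment_symm]⟩

/-- A split hyperplane has a vertex strictly on each side; since all vertices other than the
antipode are neighbours, these two are antipodal and all other vertices lie on the hyperplane. -/
lemma coordinate_of_split {d : ℕ} (hd : 2 ≤ d) {H : AffineSubspace ℝ (E d)}
    (h : IsSplitHyperplane (crossVertices d) H) :
    ∃ i : Fin d, (H : Set (E d)) = {x : E d | x i = 0} := by
  obtain ⟨-, hfin, ⟨p, hpH, hp⟩, hsep⟩ := h
  rw [adim_cross hd] at hfin
  rw [intrinsicInterior_cross hd] at hp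
  have hlt : H.direction < ⊤ := by
    refine lt_top_iff_ne_top.2 fun h => ?_
    rw [h, finrank_top] at hfin
    simp at hfin
  obtain ⟨f, hf0, hle⟩ := Submodule.exists_le_ker_of_lt_top _ hlt
  have hker : H.direction = LinearMap.ker f := by
    refine Submodule.eq_of_le_of_finrank_eq hle ?_
    have := Module.Dual.finrank_ker_add_one_of_ne_zero hf0
    simp only [finrank_euclideanSpace, Fintype.card_fin] at this
    omega
  have hH : ∀ x, x ∈ H ↔ f x = f p := by
    intro x
    rw [← AffineSubspace.vsub_right_mem_direction_iff_mem hpH, hker, LinearMap.mem_ker,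
      vsub_eq_sub, map_sub, sub_eq_zero]
  obtain ⟨v, hv⟩ : ∃ v, 0 < f v := by
    obtain ⟨v, hv⟩ := DFunLike.ne_iff.1 hf0
    rcases lt_or_gt_of_ne hv with h | h
    · exact ⟨-v, by simpa using h⟩
    · exact ⟨v, h⟩
  obtain ⟨u, hu, hpu⟩ := exists_vertex_gt hp f hv
  obtain ⟨w, hw, hpw⟩ := exists_vertex_gt hp (-f) (v := -v) (by simpa using hv)
  simp only [LinearMap.neg_apply, neg_lt_neg_iff] at hpw
  obtain ⟨i, s, hs, rfl⟩ := mem_cross_iff.1 hu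
  obtain ⟨i', t, ht, rfl⟩ := mem_cross_iff.1 hw
  obtain rfl : i = i' := by
    by_contra hne
    exact hsep _ _ (isEdge_cross hne hs ht) (strictlySeparates_of_lt hH hpu hpw)
  have hother : ∀ j, j ≠ i → ∀ r : ℝ, (r = 1 ∨ r = -1) →
      f (r • EuclideanSpace.single j (1 : ℝ)) = f p := by
    intro j hj r hr
    apply le_antisymm
    · by_contra! hc
      exact hsep _ _ (isEdge_cross hj hr ht) (strictlySeparates_of_lt hH hc hpw)
    · by_contra! hc
      exact hsep _ _ (isEdge_cross hj.symm hs hr) (strictlySeparates_of_lt hH hpu hc)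
  have hpm : ∀ j, j ≠ i → f (EuclideanSpace.single j (1 : ℝ)) = 0 ∧ f p = 0 := by
    intro j hj
    have h1 := hother j hj 1 (Or.inl rfl)
    have h2 := hother j hj (-1) (Or.inr rfl)
    simp only [one_smul, neg_smul, map_neg] at h1 h2
    constructor <;> linarith
  have hfp : f p = 0 := by
    have : Nontrivial (Fin d) := Fin.nontrivial_iff_two_le.2 hd
    obtain ⟨j, hj⟩ := exists_ne i
    exact (hpm j hj).2
  have hfx : ∀ x : E d, f x = x i * f (EuclideanSpace.single i (1 : ℝ)) := by
    intro x
    conv_lhs => rw [← (EuclideanSpace.basisFun (Fin d) ℝ).sum_repr x]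
    rw [map_sum, Finset.sum_eq_single i]
    · simp
    · intro j _ hj
      simp [(hpm j hj).1]
    · simp
  refine ⟨i, ?_⟩
  ext x
  rw [SetLike.mem_coe, hH, hfp, hfx, Set.mem_ofPred_eq, mul_eq_zero, or_iff_left]
  intro h0
  rw [map_smul, h0, hfp] at hpu
  simp at hpu

/-! ### Coordinate hyperplanes are split hyperplanes -/

/-- If a face contains a point `u` with `s * u i > 0`, it contains the vertex `s eᵢ`: otherwise
the functional `a` could be tilted by a multiple of `s * x i` without exceeding its maximum `M`
at any vertex, yet exceeding it at `u`. -/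
lemma vertex_mem_face {d : ℕ} {a : E d →ᵃ[ℝ] ℝ} {M : ℝ} (hM : ∀ v ∈ crossVertices d, a v ≤ M)
    {u : E d} (hu : u ∈ convexHull ℝ (crossVertices d)) (hau : M ≤ a u) {i : Fin d} {s : ℝ}
    (hs : s = 1 ∨ s = -1) (hpos : 0 < s * u i) :
    a (s • EuclideanSpace.single i (1 : ℝ)) = M := by
  refine le_antisymm (hM _ (smul_single_mem i hs)) ?_
  by_contra! hlt
  set δ := M - a (s • EuclideanSpace.single i (1 : ℝ)) with hδ
  have hδ0 : 0 < δ := by linarith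
  have hss : s * s = 1 := by rcases hs with rfl | rfl <;> norm_num
  have key : ∀ v ∈ crossVertices d, (a + edgeFunctional i i (δ * s) 0) v ≤ M := by
    intro v hv
    have hMv := hM v hv
    obtain ⟨j, t, ht, rfl⟩ := mem_cross_iff.1 hv
    rw [AffineMap.coe_add, Pi.add_apply, edgeFunctional_apply]
    by_cases hj : j = i
    · subst hj
      by_cases hts : t = s
      · subst hts
        simp only [PiLp.smul_apply, PiLp.single_apply, if_true, smul_eq_mul]
        nlinarith
      · have : s * t = -1 := by
          rcases hs with rfl | rfl <;> rcases ht with rfl | rfl <;> simp_all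
        simp only [PiLp.smul_apply, PiLp.single_apply, if_true, smul_eq_mul]
        nlinarith
    · simpa [Ne.symm hj] using hMv
  have := affine_le_of_mem_hull _ key hu
  rw [AffineMap.coe_add, Pi.add_apply, edgeFunctional_apply] at this
  nlinarith [mul_pos hδ0 hpos]

/-- An edge crossing `x i = 0` would contain both `eᵢ` and `-eᵢ`, hence the centre, hence every
vertex, which is impossible in dimension at least two. -/
lemma not_edge_of_pos_neg {d : ℕ} (hd : 2 ≤ d) {u w : E d} {i : Fin d}
    (h : IsFaceOf (crossVertices d) (convexHull ℝ {u, w})) (hu : 0 < u i) (hw : w i < 0) :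
    False := by
  obtain ⟨a, ha⟩ := h
  have hu' : u ∈ convexHull ℝ {u, w} := subset_convexHull ℝ _ (by simp)
  have hw' : w ∈ convexHull ℝ {u, w} := subset_convexHull ℝ _ (by simp)
  obtain ⟨huP, humax⟩ := ha.subset hu'
  obtain ⟨hwP, hwmax⟩ := ha.subset hw'
  have hM : ∀ v ∈ crossVertices d, a v ≤ a u := fun v hv => humax v (subset_convexHull ℝ _ hv)
  have hplus := vertex_mem_face hM huP le_rfl (i := i) (s := 1) (Or.inl rfl) (by simpa using hu)
  have hminus := vertex_mem_face hM hwP (hwmax u huP) (i := i) (s := -1) (Or.inr rfl)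
    (by simpa using hw)
  have hanti : ∀ x : E d, a ((1 : ℝ) • x) + a ((-1 : ℝ) • x) = 2 * a 0 := by
    intro x
    rw [a.decomp]
    simp
    ring
  have : Nontrivial (Fin d) := Fin.nontrivial_iff_two_le.2 hd
  obtain ⟨j, hj⟩ := exists_ne i
  have hj1 : a u ≤ a ((1 : ℝ) • EuclideanSpace.single j (1 : ℝ)) := by
    have h1 := hanti (EuclideanSpace.single i (1 : ℝ))
    have h2 := hanti (EuclideanSpace.single j (1 : ℝ))
    have h3 := hM _ (smul_single_mem j (Or.inr rfl))
    linarith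
  have hmem : ∀ v ∈ crossVertices d, a u ≤ a v → v ∈ segment ℝ u w := by
    intro v hv hav
    rw [← convexHull_pair, ha]
    exact ⟨subset_convexHull ℝ _ hv, fun y hy => (humax y hy).trans hav⟩
  obtain ⟨a₁, b₁, -, -, hab₁, e₁⟩ := hmem _ (smul_single_mem i (Or.inl rfl)) hplus.ge
  obtain ⟨a₂, b₂, -, -, hab₂, e₂⟩ := hmem _ (smul_single_mem i (Or.inr rfl)) hminus.ge
  obtain ⟨a₃, b₃, -, -, hab₃, e₃⟩ := hmem _ (smul_single_mem j (Or.inl rfl)) hj1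
  have c : ∀ {α β r : ℝ} {l : Fin d}, α • u + β • w = r • EuclideanSpace.single l (1 : ℝ) →
      ∀ k, α * u k + β * w k = r * (if k = l then 1 else 0) := by
    intro α β r l he k
    have := congrArg (fun x : E d => x k) he
    simpa [PiLp.single_apply] using this
  have e1i := c e₁ i
  have e2i := c e₂ i
  have e1j := c e₁ j
  have e2j := c e₂ j
  have e3j := c e₃ j
  simp only [if_true, if_neg hj] at e1i e2i e1j e2j e3j
  obtain rfl : a₁ = 1 - b₁ := by linarith
  obtain rfl : a₂ = 1 - b₂ := by linarith
  obtain rfl : a₃ = 1 - b₃ := by linarith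
  -- The points `eᵢ`, `-eᵢ` of the segment agree in coordinate `j`, so the segment is constant
  -- there; but it also contains `eⱼ`.
  have hprod : (b₁ - b₂) * (w j - u j) = 0 := by linear_combination e1j - e2j
  rcases mul_eq_zero.1 hprod with h0 | h0
  · have : b₁ = b₂ := by linarith
    subst this
    linarith
  · have : w j = u j := by linarith
    rw [this] at e1j e3j
    linarith

lemma split_of_coordinate {d : ℕ} (hd : 2 ≤ d) {H : AffineSubspace ℝ (E d)} {i : Fin d}
    (h : (H : Set (E d)) = {x : E d | x i = 0}) : IsSplitHyperplane (crossVertices d) H := by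
  have hmem : ∀ x, x ∈ H ↔ x i = 0 := fun x => by rw [← SetLike.mem_coe, h, Set.mem_ofPred_eq]
  have h0 : (0 : E d) ∈ H := (hmem 0).2 rfl
  refine ⟨by rw [affineSpan_cross hd]; exact le_top, ?_, ?_, ?_⟩
  · rw [adim_cross hd]
    set f : Module.Dual ℝ (E d) := (EuclideanSpace.proj i : E d →L[ℝ] ℝ).toLinearMap with hf
    have hf0 : f ≠ 0 := by
      intro hz
      have := congrArg (fun g : Module.Dual ℝ (E d) => g (EuclideanSpace.single i (1 : ℝ))) hz
      simp [hf] at this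
    have hdir : H.direction = LinearMap.ker f := by
      ext x
      have := AffineSubspace.vsub_right_mem_direction_iff_mem h0 x
      rw [vsub_eq_sub, sub_zero] at this
      rw [this, hmem, LinearMap.mem_ker]
      rfl
    rw [hdir, Module.Dual.finrank_ker_add_one_of_ne_zero hf0]
    simp
  · exact ⟨0, h0, by rw [intrinsicInterior_cross hd]; exact zero_mem_interior hd⟩
  · rintro u w ⟨-, hface⟩ ⟨hu, hw, x, ⟨a, b, ha, hb, -, rfl⟩, hx⟩
    rw [SetLike.mem_coe, hmem] at hx
    rw [hmem] at hu hw
    simp only [PiLp.add_apply, PiLp.smul_apply, smul_eq_mul] at hx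
    rcases lt_or_gt_of_ne hu with hu | hu
    · have hw' : 0 < w i := by
        by_contra! hc
        nlinarith [mul_neg_of_pos_of_neg ha hu, mul_nonpos_of_nonneg_of_nonpos hb.le hc]
      rw [Set.pair_comm] at hface
      exact not_edge_of_pos_neg hd hface hw' hu
    · have hw' : w i < 0 := by
        by_contra! hc
        nlinarith [mul_pos ha hu, mul_nonneg hb.le hc]
      exact not_edge_of_pos_neg hd hface hu hw'

/-- The split hyperplanes of the regular `d`-crosspolytope are exactly
the coordinate hyperplanes, and any two distinct ones meet in the interior; hence no two
splits of the crosspolytope are compatible. -/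
theorem crosspolytope_splits (d : ℕ) (hd : 2 ≤ d) :
    (∀ H : AffineSubspace ℝ (E d),
      (IsSplitHyperplane (crossVertices d) H ↔
        ∃ i : Fin d, (H : Set (E d)) = {x : E d | x i = 0})) ∧
    (∀ H₁ H₂ : AffineSubspace ℝ (E d),
      IsSplitHyperplane (crossVertices d) H₁ → IsSplitHyperplane (crossVertices d) H₂ →
      H₁ ≠ H₂ →
      ((H₁ : Set (E d)) ∩ (H₂ : Set (E d)) ∩
        intrinsicInterior ℝ (convexHull ℝ (crossVertices d))).Nonempty) := by
  have key : ∀ H : AffineSubspace ℝ (E d), IsSplitHyperplane (crossVertices d) H ↔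
      ∃ i : Fin d, (H : Set (E d)) = {x : E d | x i = 0} :=
    fun H => ⟨coordinate_of_split hd, fun ⟨_, h⟩ => split_of_coordinate hd h⟩
  refine ⟨key, fun H₁ H₂ h₁ h₂ _ => ?_⟩
  obtain ⟨i, hi⟩ := (key H₁).1 h₁
  obtain ⟨j, hj⟩ := (key H₂).1 h₂
  refine ⟨0, ⟨?_, ?_⟩, by rw [intrinsicInterior_cross hd]; exact zero_mem_interior hd⟩
  · rw [hi]; rfl
  · rw [hj]; rfl

end TSP
end
end
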